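/- Fix positive parameters c, λ, μ, T with μ < 2λ and cT > 1. Then there exists v_◦ > 0 such that for every v ∈ [0, v_◦) the implied volatility smile of the variance-gamma mixture model is W-shaped: for every continuous function σ_v : (0,∞) → (0,∞) satisfying C_v(K) = C_BS(K, σ_v(K)) for all K > 0 (where C_v is the call-price function of f_v, with f_0 the double gamma density in the case v = 0), there exists σ_* > 0 such that (i) there exist points 0 < K_0 < K_1 < K_2 < K_3 < K_4 with σ_v(K_0) > σ_*, σ_v(K_1) < σ_*, σ_v(K_2) > σ_*, σ_v(K_3) < σ_*, σ_v(K_4) > σ_*, and (ii) there do not exist six points 0 < x_0 < x_1 < ... < x_5 such that (σ_v(x_i) − σ_*)·(σ_v(x_{i+1}) − σ_*) < 0 for all i; i.e., K ↦ σ_v(K) − σ_* has exactly four sign changes, with sign sequence (+,−,+,−,+). -/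

import Mathlib

open MeasureTheory

/-- Density of the variance-gamma component `X^+_T`. -/
noncomputable def vgPlus (c lam mu T v x : ℝ) : ℝ :=
  ∫ l in Set.Ioi (0 : ℝ),
    (Real.sqrt (2 * Real.pi * v ^ 2 * l))⁻¹ *
      Real.exp (-(x - (mu - v ^ 2 / 2) * l) ^ 2 / (2 * v ^ 2 * l)) *
      ((lam + mu / 2) ^ (c * T) / Real.Gamma (c * T)) * l ^ (c * T - 1) *
      Real.exp (-(lam + mu / 2) * l)

/-- Density of the variance-gamma component `X^-_T`. -/
noncomputable def vgMinus (c lam mu T v x : ℝ) : ℝ :=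
  ∫ l in Set.Ioi (0 : ℝ),
    (Real.sqrt (2 * Real.pi * v ^ 2 * l))⁻¹ *
      Real.exp (-(x - (-mu - v ^ 2 / 2) * l) ^ 2 / (2 * v ^ 2 * l)) *
      ((lam - mu / 2) ^ (c * T) / Real.Gamma (c * T)) * l ^ (c * T - 1) *
      Real.exp (-(lam - mu / 2) * l)

/-- Mixture weight `a = (1 + μ/(2λ))^{cT}`. -/
noncomputable def mixA (c lam mu T : ℝ) : ℝ := (1 + mu / (2 * lam)) ^ (c * T)

/-- Mixture weight `b = (1 - μ/(2λ))^{cT}`. -/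
noncomputable def mixB (c lam mu T : ℝ) : ℝ := (1 - mu / (2 * lam)) ^ (c * T)

/-- Density of the variance-gamma mixture model (for `v > 0`). -/
noncomputable def vgMix (c lam mu T v x : ℝ) : ℝ :=
  (mixA c lam mu T * vgMinus c lam mu T v x + mixB c lam mu T * vgPlus c lam mu T v x) /
    (mixA c lam mu T + mixB c lam mu T)

/-- `λ₊ = λ/μ + 1/2`. -/
noncomputable def lamPlus (lam mu : ℝ) : ℝ := lam / mu + 1 / 2

/-- `λ₋ = λ/μ - 1/2`. -/
noncomputable def lamMinus (lam mu : ℝ) : ℝ := lam / mu - 1 / 2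

/-- The asymmetric double gamma density (the `v = 0` limit of the mixture model). -/
noncomputable def doubleGamma (c lam mu T x : ℝ) : ℝ :=
  if x < 0 then
    (mixA c lam mu T / (mixA c lam mu T + mixB c lam mu T)) *
      (lamMinus lam mu ^ (c * T) / Real.Gamma (c * T)) * (-x) ^ (c * T - 1) *
      Real.exp (lamMinus lam mu * x)
  else if 0 < x then
    (mixB c lam mu T / (mixA c lam mu T + mixB c lam mu T)) *
      (lamPlus lam mu ^ (c * T) / Real.Gamma (c * T)) * x ^ (c * T - 1) *
      Real.exp (-lamPlus lam mu * x)
  else 0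

/-- Density of the variance-gamma mixture model for `v ≥ 0`, with the double gamma
density as the `v = 0` case. -/
noncomputable def modelDensity (c lam mu T v x : ℝ) : ℝ :=
  if v = 0 then doubleGamma c lam mu T x else vgMix c lam mu T v x

/-- Standard normal cumulative distribution function. -/
noncomputable def stdNormalCDF (x : ℝ) : ℝ :=
  (Real.sqrt (2 * Real.pi))⁻¹ * ∫ t in Set.Iic x, Real.exp (-t ^ 2 / 2)

/-- Black–Scholes call price with `S₀ = 1` and total volatility `σ`. -/
noncomputable def callBS (K σ : ℝ) : ℝ :=
  stdNormalCDF (-Real.log K / σ + σ / 2) - K * stdNormalCDF (-Real.log K / σ - σ / 2)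

/-- Call price associated to a log-price density `f` (with `S₀ = 1`). -/
noncomputable def callPrice (f : ℝ → ℝ) (K : ℝ) : ℝ :=
  ∫ x in Set.Ioi (Real.log K), (Real.exp x - K) * f x

/-!
The price weights balance so that every density of the model is `N e^{-x/2} p(x)` with `p` even.
Hence `x ↦ -x` exchanges puts and calls, the smile is symmetric in the log-strike, and only positive
log-strikes matter. The sign of `σ_v(e^κ) - σ` is that of the price difference between the model
density `f` and the Gaussian density `g` of volatility `σ`. Up to exponential weights `f - g` is the
second derivative of that difference, so that, by Rolle's theorem and symmetry, alternations of the
smile about `σ` produce alternations of `f - g` on `(0, ∞)`. The latter are limited because `x`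
times the derivative of `log (f / g)` is quadratic for the double gamma density, while for small
`v > 0` a Riccati (Bessel) equation makes its slope at its zeros a positive multiple of a function
which is concave away from `0`.

Conversely, `f` is almost zero at the money while its tails are heavier than Gaussian. So the smile
falls away from its value at the money and rises in the wings, and a level slightly below the value
at the money gives the W. That one `v_◦` serves all admissible smiles follows from bounds on the
at-the-money volatility in terms of `E[S^{1/2}]`.
-/

open Set Filter Topology

/-! ### Alternations of sign -/

lemma neg_one_pow_tsub {m n : ℕ} (h : m ≤ n) : (-1 : ℝ) ^ (n - m) = (-1) ^ n * (-1) ^ m := by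
  rw [← Nat.sub_add_cancel h, pow_add, mul_assoc, ← mul_pow, Nat.add_sub_cancel]
  simp

lemma le_of_forall_lt_succ {x : ℕ → ℝ} {n : ℕ} (hx : ∀ i < n, x i < x (i + 1)) {i j : ℕ}
    (hij : i ≤ j) (hj : j ≤ n) : x i ≤ x j :=
  monotoneOn_of_le_succ (s := Iic n) ordConnected_Iic (fun k _ _ hk => (hx k hk).le)
    (hij.trans hj) hj hij

/-- `f` takes values of strictly alternating sign `+, -, +, …` at some `n + 1` increasing points
of `s`. The pattern `-, +, -, …` is expressed by applying this to `-f`. -/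
def AlternatesOn (f : ℝ → ℝ) (s : Set ℝ) (n : ℕ) : Prop :=
  ∃ x : ℕ → ℝ, (∀ i ≤ n, x i ∈ s) ∧ (∀ i < n, x i < x (i + 1)) ∧ ∀ i ≤ n, 0 < (-1) ^ i * f (x i)

namespace AlternatesOn

variable {f g : ℝ → ℝ} {s t : Set ℝ} {m n : ℕ}

lemma of_le (h : AlternatesOn f s n) (hmn : m ≤ n) : AlternatesOn f s m := by
  obtain ⟨x, hxs, hx, hf⟩ := h
  exact ⟨x, fun i hi => hxs i (hi.trans hmn), fun i hi => hx i (hi.trans_le hmn),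
    fun i hi => hf i (hi.trans hmn)⟩

lemma map {φ : ℝ → ℝ} (h : AlternatesOn f s n) (hφ : StrictMonoOn φ s) (hst : MapsTo φ s t)
    (hfg : ∀ x ∈ s, SignType.sign (g (φ x)) = SignType.sign (f x)) : AlternatesOn g t n := by
  obtain ⟨x, hxs, hx, hf⟩ := h
  refine ⟨φ ∘ x, fun i hi => hst (hxs i hi),
    fun i hi => hφ (hxs i hi.le) (hxs (i + 1) hi) (hx i hi), fun i hi => ?_⟩
  have hpos := hf i hi
  rw [← sign_eq_one_iff, sign_mul] at hpos ⊢
  rwa [Function.comp_apply, hfg _ (hxs i hi)]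

lemma congr_sign (h : AlternatesOn f s n)
    (hfg : ∀ x ∈ s, SignType.sign (g x) = SignType.sign (f x)) : AlternatesOn g s n :=
  h.map strictMonoOn_id (mapsTo_id s) hfg

lemma of_pos_mul {c : ℝ → ℝ} (h : AlternatesOn (fun x => c x * f x) s n) (hc : ∀ x ∈ s, 0 < c x) :
    AlternatesOn f s n :=
  h.congr_sign fun x hx => by rw [sign_mul, sign_pos (hc x hx), one_mul]

lemma of_increments {f' : ℝ → ℝ} [s.OrdConnected] (hf : ∀ x ∈ s, HasDerivAt f (f' x) x)
    {z : ℕ → ℝ} (hzs : ∀ i ≤ n + 1, z i ∈ s) (hz : ∀ i ≤ n, z i < z (i + 1))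
    (hinc : ∀ i ≤ n, 0 < (-1) ^ i * (f (z (i + 1)) - f (z i))) : AlternatesOn f' s n := by
  have slope : ∀ i, ∃ y, i ≤ n → y ∈ Ioo (z i) (z (i + 1)) ∧ 0 < (-1) ^ i * f' y := by
    intro i
    by_cases hi : i ≤ n
    · have hsub : Icc (z i) (z (i + 1)) ⊆ s :=
        ‹s.OrdConnected›.out (hzs i (hi.trans n.le_succ)) (hzs (i + 1) (by lia))
      obtain ⟨y, hy, hy'⟩ := exists_hasDerivAt_eq_slope f f' (hz i hi)
        (fun x hx => (hf x (hsub hx)).continuousAt.continuousWithinAt)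
        (fun x hx => hf x (hsub (Ioo_subset_Icc_self hx)))
      refine ⟨y, fun _ => ⟨hy, ?_⟩⟩
      rw [hy', ← mul_div_assoc]
      exact div_pos (hinc i hi) (sub_pos.2 (hz i hi))
    · exact ⟨0, fun h => absurd h hi⟩
  choose y hy using slope
  refine ⟨y, fun i hi => ?_, fun i hi => ?_, fun i hi => (hy i hi).2⟩
  · exact ‹s.OrdConnected›.out (hzs i (by lia)) (hzs (i + 1) (by lia))
      (Ioo_subset_Icc_self (hy i hi).1)
  · exact (hy i hi.le).1.2.trans (hy (i + 1) hi).1.1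

lemma neg_deriv {f' : ℝ → ℝ} [s.OrdConnected] (hf : ∀ x ∈ s, HasDerivAt f (f' x) x)
    (h : AlternatesOn f s (n + 1)) : AlternatesOn (-f') s n := by
  obtain ⟨x, hxs, hx, hfx⟩ := h
  refine of_increments (fun y hy => (hf y hy).neg) hxs (fun i hi => hx i (by lia)) fun i hi => ?_
  have h₀ := hfx i (by lia)
  have h₁ := hfx (i + 1) (by lia)
  rw [pow_succ] at h₁
  simp only [Pi.neg_apply]
  linarith

/-- A function vanishing at `±∞` must first rise to its first alternation point and finally
return to `0` after the last one, which gives two additional monotonicity intervals. -/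
lemma deriv_of_tendsto_zero {f' : ℝ → ℝ} (hf : ∀ x, HasDerivAt f (f' x) x)
    (hbot : Tendsto f atBot (𝓝 0)) (htop : Tendsto f atTop (𝓝 0))
    (h : AlternatesOn f univ n) : AlternatesOn f' univ (n + 1) := by
  obtain ⟨x, -, hx, hfx⟩ := h
  obtain ⟨a, hax, hfa⟩ : ∃ a < x 0, f a < f (x 0) :=
    ((eventually_lt_atBot (x 0)).and
      (hbot.eventually (gt_mem_nhds (by simpa using hfx 0 n.zero_le)))).exists
  obtain ⟨b, hxb, hfb⟩ : ∃ b > x n, (-1) ^ n * f b < (-1) ^ n * f (x n) :=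
    ((eventually_gt_atTop (x n)).and
      ((htop.const_mul ((-1) ^ n)).eventually
        (gt_mem_nhds (by simpa using hfx n le_rfl)))).exists
  let z : ℕ → ℝ
    | 0 => a
    | i + 1 => if i ≤ n then x i else b
  have step : ∀ i ≤ n + 1, z i < z (i + 1) ∧ 0 < (-1) ^ i * (f (z (i + 1)) - f (z i)) := by
    rintro (_ | i) hi
    · simpa [z] using ⟨hax, hfa⟩
    rcases (Nat.le_of_succ_le_succ hi).eq_or_lt with rfl | hin
    · simp only [z, le_refl, if_true, Nat.not_succ_le_self, if_false, pow_succ]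
      exact ⟨hxb, by linarith⟩
    · have h₀ := hfx i hin.le
      have h₁ := hfx (i + 1) hin
      rw [pow_succ] at h₁
      simp only [z, hin.le, if_true, Nat.succ_le_of_lt hin, pow_succ]
      exact ⟨hx i hin, by linarith⟩
  exact of_increments (fun x _ => hf x) (fun _ _ => mem_univ _) (fun i hi => (step i hi).1)
    fun i hi => (step i hi).2

lemma of_neg_comp_neg (h : AlternatesOn (-f) univ n) (hn : Odd n)
    (hf : ∀ x, SignType.sign (f (-x)) = SignType.sign (f x)) : AlternatesOn f univ n := by
  obtain ⟨x, -, hx, hfx⟩ := h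
  refine ⟨fun i => -x (n - i), fun _ _ => mem_univ _, fun i hi => ?_, fun i hi => ?_⟩
  · have := hx (n - (i + 1)) (by lia)
    rw [show n - (i + 1) + 1 = n - i by lia] at this
    exact neg_lt_neg this
  · have hpos := hfx (n - i) (n.sub_le i)
    rw [neg_one_pow_tsub hi, hn.neg_one_pow, neg_one_mul, Pi.neg_apply, neg_mul_neg,
      ← sign_eq_one_iff, sign_mul] at hpos
    rwa [← sign_eq_one_iff, sign_mul, hf]

/-- The alternation point number `m` is not `0`, and on the side of `0` where it lies there are
at least `n + 1` of the `m + n + 1` points. -/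
lemma Ioi_zero_of_univ (h : AlternatesOn f univ (m + n)) (hm : Even m) (hnm : n ≤ m)
    (hf : ∀ x, SignType.sign (f (-x)) = SignType.sign (f x)) (h₀ : f 0 ≤ 0) :
    AlternatesOn f (Ioi 0) n := by
  obtain ⟨x, -, hx, hfx⟩ := h
  have hxm : 0 < f (x m) := by simpa [hm.neg_one_pow] using hfx m (by lia)
  rcases lt_trichotomy (x m) 0 with hneg | hzero | hpos
  · refine ⟨fun i => -x (m - i), fun i _ => ?_, fun i hi => ?_, fun i hi => ?_⟩
    · exact neg_pos.2 ((le_of_forall_lt_succ hx (m.sub_le i) (by lia)).trans_lt hneg)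
    · have := hx (m - (i + 1)) (by lia)
      rw [show m - (i + 1) + 1 = m - i by lia] at this
      exact neg_lt_neg this
    · have hpos := hfx (m - i) (by lia)
      rw [neg_one_pow_tsub (hi.trans hnm), hm.neg_one_pow, one_mul, ← sign_eq_one_iff,
        sign_mul] at hpos
      rwa [← sign_eq_one_iff, sign_mul, hf]
  · exact absurd (hzero ▸ hxm) h₀.not_gt
  · refine ⟨fun i => x (m + i), fun i hi => ?_, fun i hi => hx (m + i) (by lia), fun i hi => ?_⟩
    · exact hpos.trans_le (le_of_forall_lt_succ hx (m.le_add_right i) (by lia))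
    · simpa [pow_add, hm.neg_one_pow] using hfx (m + i) (by lia)

lemma Ioi_of_nonpos {a b : ℝ} (h : AlternatesOn f (Ioi a) n) (hf : ∀ x ∈ Ioc a b, f x ≤ 0) :
    AlternatesOn f (Ioi b) n := by
  obtain ⟨x, hxs, hx, hfx⟩ := h
  have hx₀ : b < x 0 := by
    by_contra! hle
    have := hfx 0 n.zero_le
    rw [pow_zero, one_mul] at this
    exact this.not_ge (hf _ ⟨hxs 0 n.zero_le, hle⟩)
  exact ⟨x, fun i hi => hx₀.trans_le (le_of_forall_lt_succ hx i.zero_le hi), hx, hfx⟩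

lemma succ_of_eventually_pos (h : AlternatesOn f s n) (hn : Odd n)
    (hf : ∀ᶠ x in atTop, x ∈ s ∧ 0 < f x) : AlternatesOn f s (n + 1) := by
  obtain ⟨x, hxs, hx, hfx⟩ := h
  obtain ⟨b, ⟨hbs, hfb⟩, hxb⟩ := (hf.and (eventually_gt_atTop (x n))).exists
  refine ⟨fun i => if i ≤ n then x i else b, fun i _ => ?_, fun i hi => ?_, fun i hi => ?_⟩
  · by_cases h : i ≤ n <;> simp [h, hxs, hbs]
  · rcases (Nat.le_of_lt_succ hi).eq_or_lt with rfl | h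
    · simpa using hxb
    · simpa [h.le, Nat.succ_le_of_lt h] using hx i h
  · rcases hi.eq_or_lt with rfl | h
    · simpa [hn.add_one.neg_one_pow] using hfb
    · simpa [Nat.le_of_lt_succ h] using hfx i (Nat.le_of_lt_succ h)

lemma or_neg_of_mul_neg {x : ℕ → ℝ} (hxs : ∀ i ≤ n, x i ∈ s) (hx : ∀ i < n, x i < x (i + 1))
    (hf : ∀ i < n, f (x i) * f (x (i + 1)) < 0) (h₀ : f (x 0) ≠ 0) :
    AlternatesOn f s n ∨ AlternatesOn (-f) s n := by
  have key : ∀ g : ℝ → ℝ, (∀ i < n, g (x i) * g (x (i + 1)) < 0) → 0 < g (x 0) →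
      AlternatesOn g s n := by
    intro g hg hg₀
    refine ⟨x, hxs, hx, fun i => ?_⟩
    induction i with
    | zero => simpa using hg₀
    | succ i ih =>
      intro hi
      have hpos := ih (i.le_succ.trans hi)
      have hneg := hg i hi
      have hsq : ((-1 : ℝ) ^ i) * (-1) ^ i = 1 := by rw [← mul_pow]; simp
      refine (pos_iff_pos_of_mul_pos ?_).1 hpos
      rw [pow_succ]
      linear_combination hneg + (g (x i) * g (x (i + 1))) * hsq
  rcases h₀.lt_or_gt with hneg | hpos
  · exact .inr (key (-f) (by simpa using hf) (by simpa using hneg))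
  · exact .inl (key f hf hpos)

end AlternatesOn

lemma not_alternatesOn_of_concaveOn {f : ℝ → ℝ} {s : Set ℝ} (hf : ConcaveOn ℝ s f) :
    ¬AlternatesOn f s 2 := by
  rintro ⟨x, hxs, hx, hfx⟩
  have h₀ : 0 < f (x 0) := by simpa using hfx 0 (by norm_num)
  have h₁ : f (x 1) < 0 := by simpa using hfx 1 (by norm_num)
  have h₂ : 0 < f (x 2) := by simpa using hfx 2 (by norm_num)
  have hmin := hf.min_le_of_mem_Icc (hxs 0 (by norm_num)) (hxs 2 (by norm_num))
    ⟨(hx 0 (by norm_num)).le, (hx 1 (by norm_num)).le⟩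
  exact (hmin.trans_lt h₁).not_gt (lt_min h₀ h₂)

/-! ### Call prices and put–call symmetry -/

lemma setIntegral_pos_of_forall_pos {f : ℝ → ℝ} {s : Set ℝ} (hs : MeasurableSet s)
    (hs₀ : 0 < volume s) (hf : IntegrableOn f s) (hpos : ∀ x ∈ s, 0 < f x) : 0 < ∫ x in s, f x := by
  rw [setIntegral_pos_iff_support_of_nonneg_ae
    ((ae_restrict_mem hs).mono fun x hx => (hpos x hx).le) hf]
  exact hs₀.trans_le (measure_mono fun x hx => ⟨(hpos x hx).ne', hx⟩)

lemma hasDerivAt_integral_Iic {g : ℝ → ℝ} (hc : Continuous g) (hg : Integrable g) (κ : ℝ) :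
    HasDerivAt (fun κ => ∫ x in Iic κ, g x) (g κ) κ := by
  have h := (intervalIntegral.integral_hasDerivAt_right (hg.intervalIntegrable (a := 0) (b := κ))
    (hc.stronglyMeasurableAtFilter _ _) hc.continuousAt).const_add (∫ x in Iic 0, g x)
  refine h.congr_of_eventuallyEq (Eventually.of_forall fun y => ?_)
  exact sub_eq_iff_eq_add'.1
    (intervalIntegral.integral_Iic_sub_Iic (hg.integrableOn (s := Iic 0)) hg.integrableOn)

lemma integral_Ioi_eq_sub {g : ℝ → ℝ} (hg : Integrable g) (κ : ℝ) :
    ∫ x in Ioi κ, g x = (∫ x, g x) - ∫ x in Iic κ, g x := by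
  rw [← compl_Iic, setIntegral_compl measurableSet_Iic hg]

lemma hasDerivAt_integral_Ioi {g : ℝ → ℝ} (hc : Continuous g) (hg : Integrable g) (κ : ℝ) :
    HasDerivAt (fun κ => ∫ x in Ioi κ, g x) (-g κ) κ := by
  simp only [integral_Ioi_eq_sub hg]
  exact (hasDerivAt_integral_Iic hc hg κ).const_sub _

lemma tendsto_integral_Ioi_atBot {g : ℝ → ℝ} (hg : Integrable g) :
    Tendsto (fun κ => ∫ x in Ioi κ, g x) atBot (𝓝 (∫ x, g x)) :=
  (aecover_Ioi tendsto_id).integral_tendsto_of_countably_generated hg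

section CallPrice

variable {g : ℝ → ℝ}

lemma integrableOn_payoff_mul (hg : Integrable g) (hg' : Integrable fun x => Real.exp x * g x)
    (s : Set ℝ) (K : ℝ) : IntegrableOn (fun x => (Real.exp x - K) * g x) s := by
  simp only [sub_mul]
  exact (hg'.sub (hg.const_mul K)).integrableOn

lemma callPrice_exp (hg : Integrable g) (hg' : Integrable fun x => Real.exp x * g x) (κ : ℝ) :
    callPrice g (Real.exp κ) =
      (∫ x in Ioi κ, Real.exp x * g x) - Real.exp κ * ∫ x in Ioi κ, g x := by
  simp only [callPrice, Real.log_exp, sub_mul]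
  rw [integral_sub hg'.integrableOn (hg.integrableOn.const_mul _), integral_const_mul]

lemma callPrice_sub {f : ℝ → ℝ} (hf : Integrable f) (hf' : Integrable fun x => Real.exp x * f x)
    (hg : Integrable g) (hg' : Integrable fun x => Real.exp x * g x) (K : ℝ) :
    callPrice (f - g) K = callPrice f K - callPrice g K := by
  simp only [callPrice, Pi.sub_apply, mul_sub]
  exact integral_sub (integrableOn_payoff_mul hf hf' _ K) (integrableOn_payoff_mul hg hg' _ K)

lemma hasDerivAt_callPrice_exp (hc : Continuous g) (hg : Integrable g)
    (hg' : Integrable fun x => Real.exp x * g x) (κ : ℝ) :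
    HasDerivAt (fun κ => callPrice g (Real.exp κ)) (Real.exp κ * -∫ x in Ioi κ, g x) κ := by
  simp only [callPrice_exp hg hg']
  refine ((hasDerivAt_integral_Ioi (by fun_prop) hg' κ).sub
    ((Real.hasDerivAt_exp κ).mul (hasDerivAt_integral_Ioi hc hg κ))).congr_deriv ?_
  ring

lemma tendsto_callPrice_exp_atTop (hg : Integrable g)
    (hg' : Integrable fun x => Real.exp x * g x) :
    Tendsto (fun κ => callPrice g (Real.exp κ)) atTop (𝓝 0) := by
  refine squeeze_zero_norm (fun κ => ?_)
    (tendsto_integral_Ioi_zero (f := fun x => ‖Real.exp x * g x‖) (μ := volume) tendsto_id)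
  rw [callPrice, Real.log_exp]
  refine (norm_integral_le_integral_norm _).trans ?_
  refine setIntegral_mono_on (integrableOn_payoff_mul hg hg' _ _).norm hg'.norm.integrableOn
    measurableSet_Ioi fun x hx => ?_
  rw [norm_mul, norm_mul]
  gcongr
  rw [Real.norm_of_nonneg (sub_nonneg.2 (Real.exp_le_exp.2 hx.le)),
    Real.norm_of_nonneg (Real.exp_pos x).le]
  exact sub_le_self _ (Real.exp_pos κ).le

lemma tendsto_callPrice_exp_atBot (hg : Integrable g)
    (hg' : Integrable fun x => Real.exp x * g x) :
    Tendsto (fun κ => callPrice g (Real.exp κ)) atBot (𝓝 (∫ x, Real.exp x * g x)) := by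
  simp only [callPrice_exp hg hg']
  simpa using (tendsto_integral_Ioi_atBot hg').sub
    (Real.tendsto_exp_atBot.mul (tendsto_integral_Ioi_atBot hg))

/-- As a function of the log-strike `κ`, the call price of `g` vanishes at `±∞` and has derivative
`-e^κ ∫_κ^∞ g`, whose second factor again vanishes at `±∞`: each differentiation gains a sign
change. -/
lemma AlternatesOn.of_callPrice {n : ℕ} (hc : Continuous g) (hg : Integrable g)
    (hg' : Integrable fun x => Real.exp x * g x) (h₀ : ∫ x, g x = 0)
    (h₀' : ∫ x, Real.exp x * g x = 0)
    (h : AlternatesOn (fun κ => callPrice g (Real.exp κ)) univ n) :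
    AlternatesOn g univ (n + 2) := by
  have htail : AlternatesOn (fun κ => -∫ x in Ioi κ, g x) univ (n + 1) :=
    (h.deriv_of_tendsto_zero (hasDerivAt_callPrice_exp hc hg hg')
      (h₀' ▸ tendsto_callPrice_exp_atBot hg hg')
      (tendsto_callPrice_exp_atTop hg hg')).of_pos_mul fun κ _ => Real.exp_pos κ
  have hderiv : ∀ κ, HasDerivAt (fun κ => -∫ x in Ioi κ, g x) (g κ) κ := fun κ =>
    (hasDerivAt_integral_Ioi hc hg κ).neg.congr_deriv (neg_neg _)
  refine htail.deriv_of_tendsto_zero hderiv ?_ ?_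
  · simpa [h₀] using (tendsto_integral_Ioi_atBot hg).neg
  · simpa using (tendsto_integral_Ioi_zero (f := g) (μ := volume) tendsto_id).neg

lemma callPrice_exp_pos (hg : Integrable g) (hg' : Integrable fun x => Real.exp x * g x) {κ : ℝ}
    (hpos : ∀ x > κ, 0 < g x) : 0 < callPrice g (Real.exp κ) := by
  rw [callPrice, Real.log_exp]
  exact setIntegral_pos_of_forall_pos measurableSet_Ioi (by simp)
    (integrableOn_payoff_mul hg hg' _ _) fun x hx =>
      mul_pos (sub_pos.2 (Real.exp_lt_exp.2 hx)) (hpos x hx)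

end CallPrice

/-- The symmetry `g(-x) = e^x g(x)` of a log-price density which expresses that puts and calls
at reciprocal strikes have equal prices up to the change of numéraire. Equivalently,
`e^{x/2} g(x)` is even. -/
def IsPutCallSymmetric (g : ℝ → ℝ) : Prop :=
  ∀ x, g (-x) = Real.exp x * g x

namespace IsPutCallSymmetric

variable {g : ℝ → ℝ}

lemma sub {f : ℝ → ℝ} (hf : IsPutCallSymmetric f) (hg : IsPutCallSymmetric g) :
    IsPutCallSymmetric (f - g) := fun x => by
  simp only [Pi.sub_apply, hf x, hg x, mul_sub]

lemma sign_neg (hs : IsPutCallSymmetric g) (x : ℝ) :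
    SignType.sign (g (-x)) = SignType.sign (g x) := by
  rw [hs x, sign_mul, sign_pos (Real.exp_pos x), one_mul]

lemma integrable_exp_mul (hs : IsPutCallSymmetric g) (hg : Integrable g) :
    Integrable fun x => Real.exp x * g x := by
  simpa only [hs _] using hg.comp_neg

lemma integral_exp_mul (hs : IsPutCallSymmetric g) : ∫ x, Real.exp x * g x = ∫ x, g x := by
  simpa only [hs _] using integral_neg_eq_self g volume

lemma integral_Ioi_exp_mul (hs : IsPutCallSymmetric g) (κ : ℝ) :
    ∫ x in Ioi κ, Real.exp x * g x = ∫ x in Iic (-κ), g x := by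
  simpa only [hs _] using integral_comp_neg_Ioi κ g

lemma callPrice_exp_neg (hs : IsPutCallSymmetric g) (hg : Integrable g) (h₀ : ∫ x, g x = 0)
    (κ : ℝ) : callPrice g (Real.exp (-κ)) = Real.exp (-κ) * callPrice g (Real.exp κ) := by
  have hg' := hs.integrable_exp_mul hg
  have htail := integral_Ioi_eq_sub hg (-κ)
  have htail' := integral_Ioi_eq_sub hg' (-κ)
  have hIic : ∫ x in Iic (-κ), Real.exp x * g x = ∫ x in Ioi κ, g x := by
    rw [← integral_comp_neg_Ioi]
    refine setIntegral_congr_fun measurableSet_Ioi fun x _ => ?_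
    simp only [hs x, ← mul_assoc, ← Real.exp_add, neg_add_cancel, Real.exp_zero, one_mul]
  have hexp : Real.exp (-κ) * Real.exp κ = 1 := by rw [← Real.exp_add]; simp
  rw [callPrice_exp hg hg', callPrice_exp hg hg', htail, htail', hs.integral_exp_mul, h₀, hIic,
    hs.integral_Ioi_exp_mul]
  linear_combination (∫ x in Ioi κ, g x) * hexp

/-- If the call price vanishes at the strike `1`, then both `g` and `e^x g` have integral `0`
over `(0, ∞)`, so that the call price at `e^κ` is an integral over `(0, κ)` only. -/
lemma callPrice_exp_lt_zero (hs : IsPutCallSymmetric g) (hg : Integrable g) (h₀ : ∫ x, g x = 0)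
    (hatm : callPrice g 1 = 0) {κ : ℝ} (hκ : 0 < κ) (hneg : ∀ x ∈ Ioo 0 κ, g x < 0) :
    callPrice g (Real.exp κ) < 0 := by
  have hg' := hs.integrable_exp_mul hg
  have hhalf : ∫ x in Ioi 0, Real.exp x * g x = -∫ x in Ioi 0, g x := by
    rw [hs.integral_Ioi_exp_mul, integral_Ioi_eq_sub hg, h₀, neg_zero]; ring
  have hhalf₀ : ∫ x in Ioi 0, g x = 0 := by
    rw [← Real.exp_zero, callPrice_exp hg hg', hhalf, Real.exp_zero] at hatm
    linarith
  have hsplit := setIntegral_union Ioc_disjoint_Ioi_same measurableSet_Ioi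
    (integrableOn_payoff_mul hg hg' (Ioc 0 κ) (Real.exp κ))
    (integrableOn_payoff_mul hg hg' (Ioi κ) (Real.exp κ))
  have htotal : ∫ x in Ioi 0, (Real.exp x - Real.exp κ) * g x = 0 := by
    simp only [sub_mul]
    rw [integral_sub hg'.integrableOn (hg.integrableOn.const_mul _), integral_const_mul, hhalf,
      hhalf₀]
    simp
  have hpos : 0 < ∫ x in Ioc 0 κ, (Real.exp x - Real.exp κ) * g x := by
    rw [integral_Ioc_eq_integral_Ioo]
    exact setIntegral_pos_of_forall_pos measurableSet_Ioo (by simpa using hκ)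
      (integrableOn_payoff_mul hg hg' _ _) fun x hx =>
        mul_pos_of_neg_of_neg (sub_neg.2 (Real.exp_lt_exp.2 hx.2)) (hneg x hx)
  rw [Ioc_union_Ioi_eq_Ioi hκ.le, htotal] at hsplit
  rw [callPrice, Real.log_exp]
  linarith

end IsPutCallSymmetric

/-- A continuous probability density of the log-price with put–call symmetry. The symmetry
includes the martingale condition `∫ e^x f(x) dx = 1`. -/
structure IsSymmetricDensity (f : ℝ → ℝ) : Prop where
  continuous : Continuous f
  nonneg : ∀ x, 0 ≤ f x
  integrable : Integrable f
  integral_eq_one : ∫ x, f x = 1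
  symmetric : IsPutCallSymmetric f

/-! ### The Black–Scholes model -/

section NormalCDF

open ProbabilityTheory

lemma gaussianPDFReal_zero_one (x : ℝ) :
    gaussianPDFReal 0 1 x = (√(2 * Real.pi))⁻¹ * Real.exp (-x ^ 2 / 2) := by
  simp [gaussianPDFReal]

lemma continuous_gaussianPDFReal_zero_one : Continuous (gaussianPDFReal 0 1) := by
  rw [funext gaussianPDFReal_zero_one]
  fun_prop

lemma stdNormalCDF_eq_integral (x : ℝ) : stdNormalCDF x = ∫ t in Iic x, gaussianPDFReal 0 1 t := by
  simp only [gaussianPDFReal_zero_one, integral_const_mul, stdNormalCDF]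

lemma hasDerivAt_stdNormalCDF (x : ℝ) : HasDerivAt stdNormalCDF (gaussianPDFReal 0 1 x) x := by
  rw [funext stdNormalCDF_eq_integral]
  exact hasDerivAt_integral_Iic continuous_gaussianPDFReal_zero_one
    (integrable_gaussianPDFReal 0 1) x

lemma tendsto_stdNormalCDF_atBot : Tendsto stdNormalCDF atBot (𝓝 0) := by
  rw [funext stdNormalCDF_eq_integral]
  exact tendsto_integral_Iic_zero tendsto_id

lemma stdNormalCDF_neg (x : ℝ) : stdNormalCDF (-x) = 1 - stdNormalCDF x := by
  have heven : ∀ t, gaussianPDFReal 0 1 (-t) = gaussianPDFReal 0 1 t := by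
    simp [gaussianPDFReal_zero_one]
  rw [stdNormalCDF_eq_integral, stdNormalCDF_eq_integral, ← integral_comp_neg_Ioi]
  simp only [heven, integral_Ioi_eq_sub (integrable_gaussianPDFReal 0 1) x,
    integral_gaussianPDFReal_eq_one 0 one_ne_zero]

lemma gaussianPDFReal_zero_one_le_one (x : ℝ) : gaussianPDFReal 0 1 x ≤ 1 := by
  rw [gaussianPDFReal_zero_one]
  refine mul_le_one₀ (inv_le_one_of_one_le₀ ?_) (Real.exp_pos _).le ?_
  · rw [Real.one_le_sqrt]; nlinarith [Real.pi_gt_three]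
  · rw [Real.exp_le_one_iff]; nlinarith [sq_nonneg x]

/-- Log-price density of the Black–Scholes model with total volatility `σ`, the density of the
normal distribution with mean `-σ²/2` and variance `σ²`. -/
noncomputable def bsDensity (σ : ℝ) : ℝ → ℝ :=
  gaussianPDFReal (-σ ^ 2 / 2) (σ ^ 2).toNNReal

variable {σ : ℝ}

lemma bsDensity_apply (hσ : 0 < σ) (x : ℝ) : bsDensity σ x =
    (√(2 * Real.pi) * σ)⁻¹ * Real.exp (-x ^ 2 / (2 * σ ^ 2) - x / 2 - σ ^ 2 / 8) := by
  rw [bsDensity, gaussianPDFReal, Real.coe_toNNReal _ (sq_nonneg σ),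
    Real.sqrt_mul (by positivity), Real.sqrt_sq hσ.le]
  congr 2
  field_simp
  ring

lemma bsDensity_pos (hσ : 0 < σ) (x : ℝ) : 0 < bsDensity σ x :=
  gaussianPDFReal_pos _ _ _ (by simpa using hσ.ne')

lemma isSymmetricDensity_bsDensity (hσ : 0 < σ) : IsSymmetricDensity (bsDensity σ) where
  continuous := by simp only [funext (bsDensity_apply hσ)]; fun_prop
  nonneg x := (bsDensity_pos hσ x).le
  integrable := integrable_gaussianPDFReal _ _
  integral_eq_one := integral_gaussianPDFReal_eq_one _ (by simpa using hσ.ne')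
  symmetric x := by
    rw [bsDensity_apply hσ, bsDensity_apply hσ, mul_left_comm, ← Real.exp_add]
    ring_nf

lemma bsDensity_eq_comp (hσ : 0 < σ) (x : ℝ) :
    bsDensity σ x = σ⁻¹ * gaussianPDFReal 0 1 (-x / σ - σ / 2) := by
  rw [bsDensity_apply hσ, gaussianPDFReal_zero_one, mul_inv, mul_comm _ σ⁻¹, mul_assoc]
  congr 3
  field_simp
  ring

lemma integral_Ioi_bsDensity (hσ : 0 < σ) (κ : ℝ) :
    ∫ x in Ioi κ, bsDensity σ x = stdNormalCDF (-κ / σ - σ / 2) := by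
  have hderiv : ∀ x ∈ Ici κ,
      HasDerivAt (fun x => -stdNormalCDF (-x / σ - σ / 2)) (bsDensity σ x) x := by
    intro x _
    have harg : HasDerivAt (fun x : ℝ => -x / σ - σ / 2) (-1 / σ) x :=
      ((hasDerivAt_neg x).div_const σ).sub_const _
    refine ((hasDerivAt_stdNormalCDF _).comp x harg).neg.congr_deriv ?_
    rw [bsDensity_eq_comp hσ]
    ring
  have hlim : Tendsto (fun x => -stdNormalCDF (-x / σ - σ / 2)) atTop (𝓝 (-0)) :=
    (tendsto_stdNormalCDF_atBot.comp (tendsto_atBot_add_const_right _ _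
      (tendsto_neg_atTop_atBot.atBot_div_const hσ))).neg
  rw [integral_Ioi_of_hasDerivAt_of_nonneg' hderiv (fun x _ => (bsDensity_pos hσ x).le) hlim]
  ring

lemma callBS_eq_callPrice {K : ℝ} (hK : 0 < K) (hσ : 0 < σ) :
    callBS K σ = callPrice (bsDensity σ) K := by
  have hd := isSymmetricDensity_bsDensity hσ
  have hexp : ∫ x in Ioi (Real.log K), Real.exp x * bsDensity σ x =
      stdNormalCDF (-Real.log K / σ + σ / 2) := by
    have hneg := stdNormalCDF_neg (Real.log K / σ - σ / 2)
    have hsplit := integral_Ioi_eq_sub hd.integrable (-Real.log K)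
    rw [integral_Ioi_bsDensity hσ, hd.integral_eq_one, neg_neg] at hsplit
    rw [hd.symmetric.integral_Ioi_exp_mul, show -Real.log K / σ + σ / 2 =
      -(Real.log K / σ - σ / 2) by ring]
    linarith
  nth_rw 2 [← Real.exp_log hK]
  rw [callPrice_exp hd.integrable (hd.symmetric.integrable_exp_mul hd.integrable), hexp,
    integral_Ioi_bsDensity hσ, Real.exp_log hK, callBS]

lemma hasDerivAt_callBS {K : ℝ} (hK : 0 < K) (hσ : 0 < σ) :
    HasDerivAt (callBS K) (gaussianPDFReal 0 1 (-Real.log K / σ + σ / 2)) σ := by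
  have hmoneyness : HasDerivAt (fun σ : ℝ => -Real.log K / σ) (Real.log K / σ ^ 2) σ := by
    refine ((hasDerivAt_inv hσ.ne').const_mul (-Real.log K)).congr_deriv ?_
    field_simp
  have hhalf : HasDerivAt (fun σ : ℝ => σ / 2) (1 / 2) σ := (hasDerivAt_id σ).div_const 2
  have hpdf : K * gaussianPDFReal 0 1 (-Real.log K / σ - σ / 2) =
      gaussianPDFReal 0 1 (-Real.log K / σ + σ / 2) := by
    nth_rw 1 [gaussianPDFReal_zero_one, gaussianPDFReal_zero_one, ← Real.exp_log hK]
    rw [mul_left_comm, ← Real.exp_add]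
    congr 2
    field_simp
    ring
  refine (((hasDerivAt_stdNormalCDF _).comp σ (hmoneyness.add hhalf)).sub
    (((hasDerivAt_stdNormalCDF _).comp σ (hmoneyness.sub hhalf)).const_mul K)).congr_deriv ?_
  simp only [Pi.add_apply, Pi.sub_apply]
  linear_combination (-(Real.log K / σ ^ 2 - 1 / 2)) * hpdf

lemma strictMonoOn_callBS {K : ℝ} (hK : 0 < K) : StrictMonoOn (callBS K) (Ioi 0) := by
  refine strictMonoOn_of_deriv_pos (convex_Ioi 0)
    (fun σ hσ => (hasDerivAt_callBS hK hσ).continuousAt.continuousWithinAt) fun σ hσ => ?_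
  rw [interior_Ioi] at hσ
  rw [(hasDerivAt_callBS hK hσ).deriv]
  exact gaussianPDFReal_pos _ _ _ one_ne_zero

lemma callBS_one (σ : ℝ) : callBS 1 σ = 1 - 2 * stdNormalCDF (-(σ / 2)) := by
  have := stdNormalCDF_neg (σ / 2)
  simp only [callBS, Real.log_one, neg_zero, zero_div, zero_add, zero_sub, one_mul]
  linarith

lemma callBS_one_le (hσ : 0 < σ) : callBS 1 σ ≤ σ := by
  obtain ⟨t, -, ht⟩ := exists_hasDerivAt_eq_slope stdNormalCDF _ (neg_lt_self (half_pos hσ))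
    (fun x _ => (hasDerivAt_stdNormalCDF x).continuousAt.continuousWithinAt)
    (fun x _ => hasDerivAt_stdNormalCDF x)
  have hle := gaussianPDFReal_zero_one_le_one t
  rw [ht, div_le_one (by linarith)] at hle
  simp only [callBS, Real.log_one, neg_zero, zero_div, zero_add, zero_sub, one_mul]
  linarith

end NormalCDF

/-! ### Half-moments and the at-the-money volatility -/

/-- The half-moment `E[S^{1/2}]` of the price `S` with log-price density `f`. -/
noncomputable def halfMoment (f : ℝ → ℝ) : ℝ :=
  ∫ x, Real.exp (x / 2) * f x

namespace IsSymmetricDensity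

variable {f : ℝ → ℝ}

lemma integrable_exp_mul (hf : IsSymmetricDensity f) : Integrable fun x => Real.exp x * f x :=
  hf.symmetric.integrable_exp_mul hf.integrable

lemma integrable_exp_half_mul (hf : IsSymmetricDensity f) :
    Integrable fun x => Real.exp (x / 2) * f x := by
  have hcont := hf.continuous
  refine (hf.integrable.add hf.integrable_exp_mul).mono' (by fun_prop) (.of_forall fun x => ?_)
  have hsq : Real.exp (x / 2) ^ 2 = Real.exp x := by rw [← Real.exp_nat_mul]; congr 1; ring
  have hle : Real.exp (x / 2) ≤ 1 + Real.exp x := by nlinarith [sq_nonneg (Real.exp (x / 2) - 1)]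
  rw [Real.norm_of_nonneg (mul_nonneg (Real.exp_pos _).le (hf.nonneg x))]
  simpa [add_mul] using mul_le_mul_of_nonneg_right hle (hf.nonneg x)

lemma integral_Ioi_exp_half_mul (hf : IsSymmetricDensity f) :
    ∫ x in Ioi 0, Real.exp (x / 2) * f x = halfMoment f / 2 := by
  have heven : ∀ x, Real.exp (-x / 2) * f (-x) = Real.exp (x / 2) * f x := fun x => by
    rw [hf.symmetric x, ← mul_assoc, ← Real.exp_add]
    congr 2
    ring
  have hsplit := integral_Ioi_eq_sub hf.integrable_exp_half_mul 0
  have hflip := integral_comp_neg_Ioi 0 fun x => Real.exp (x / 2) * f x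
  simp only [heven, neg_zero] at hflip
  rw [halfMoment]
  linarith

lemma integral_Ioi_exp_mul_eq_one_sub (hf : IsSymmetricDensity f) :
    ∫ x in Ioi 0, Real.exp x * f x = 1 - ∫ x in Ioi 0, f x := by
  have hsplit := integral_Ioi_eq_sub hf.integrable 0
  rw [hf.symmetric.integral_Ioi_exp_mul, neg_zero]
  linarith [hf.integral_eq_one]

lemma callPrice_one (hf : IsSymmetricDensity f) : callPrice f 1 = 1 - 2 * ∫ x in Ioi 0, f x := by
  have h := callPrice_exp hf.integrable hf.integrable_exp_mul 0
  rw [Real.exp_zero, one_mul, hf.integral_Ioi_exp_mul_eq_one_sub] at h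
  linarith

lemma integral_Ioi_le_halfMoment (hf : IsSymmetricDensity f) :
    ∫ x in Ioi 0, f x ≤ halfMoment f / 2 := by
  rw [← hf.integral_Ioi_exp_half_mul]
  refine setIntegral_mono_on hf.integrable.integrableOn hf.integrable_exp_half_mul.integrableOn
    measurableSet_Ioi fun x hx => le_mul_of_one_le_left (hf.nonneg x) ?_
  exact Real.one_le_exp (half_pos (mem_Ioi.1 hx)).le

lemma sq_halfMoment_le_integral_Ioi (hf : IsSymmetricDensity f) :
    halfMoment f ^ 2 / 4 ≤ ∫ x in Ioi 0, f x := by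
  set t := halfMoment f / 2 with ht
  have hint := hf.integrable_exp_half_mul
  have hint' := hf.integrable_exp_mul
  have hsq : ∀ x, (1 - t * Real.exp (x / 2)) ^ 2 * f x =
      f x - 2 * t * (Real.exp (x / 2) * f x) + t ^ 2 * (Real.exp x * f x) := fun x => by
    have : Real.exp x = Real.exp (x / 2) ^ 2 := by rw [← Real.exp_nat_mul]; congr 1; ring
    rw [this]
    ring
  have hnonneg : 0 ≤ ∫ x in Ioi 0, (1 - t * Real.exp (x / 2)) ^ 2 * f x :=
    integral_nonneg fun x => mul_nonneg (sq_nonneg _) (hf.nonneg x)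
  have hsub : IntegrableOn (fun x => f x - 2 * t * (Real.exp (x / 2) * f x)) (Ioi 0) :=
    (hf.integrable.sub (hint.const_mul _)).integrableOn
  simp only [hsq] at hnonneg
  rw [integral_add hsub (hint'.const_mul _).integrableOn,
    integral_sub hf.integrable.integrableOn (hint.const_mul _).integrableOn, integral_const_mul,
    integral_const_mul, hf.integral_Ioi_exp_half_mul, hf.integral_Ioi_exp_mul_eq_one_sub] at hnonneg
  have hmass : 0 ≤ ∫ x in Ioi 0, f x := integral_nonneg hf.nonneg
  nlinarith [mul_nonneg (sq_nonneg t) hmass]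

end IsSymmetricDensity

theorem exists_bounds_of_callBS_one_eq {i₁ i₂ : ℝ} (h₁ : 0 < i₁) (h₂ : i₂ < 1) :
    ∃ m > 0, ∃ M, ∀ f, IsSymmetricDensity f → halfMoment f ∈ Icc i₁ i₂ →
      ∀ σ > 0, callBS 1 σ = callPrice f 1 → σ ∈ Icc m M := by
  have htail : Tendsto (fun σ : ℝ => stdNormalCDF (-(σ / 2))) atTop (𝓝 0) :=
    tendsto_stdNormalCDF_atBot.comp
      (tendsto_neg_atTop_atBot.comp (tendsto_id.atTop_div_const two_pos))
  obtain ⟨M, hM⟩ := (htail.eventually_lt_const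
    (show 0 < i₁ ^ 2 / 4 by positivity)).exists_forall_of_atTop
  refine ⟨1 - i₂, sub_pos.2 h₂, M, fun f hf hi σ hσ hcall => ⟨?_, ?_⟩⟩
  · linarith [callBS_one_le hσ, hf.integral_Ioi_le_halfMoment, hf.callPrice_one, hi.2]
  · by_contra! hlt
    have hsmall := hM σ hlt.le
    have hsq : i₁ ^ 2 ≤ halfMoment f ^ 2 := pow_le_pow_left₀ h₁.le hi.1 2
    linarith [callBS_one σ, hf.sq_halfMoment_le_integral_Ioi, hf.callPrice_one]

/-! ### W-shaped smiles -/

lemma sign_sub_of_strictMonoOn {f : ℝ → ℝ} {s : Set ℝ} (hf : StrictMonoOn f s) {x y : ℝ}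
    (hx : x ∈ s) (hy : y ∈ s) : SignType.sign (f x - f y) = SignType.sign (x - y) := by
  rcases lt_trichotomy x y with hxy | rfl | hxy
  · rw [sign_neg (sub_neg.2 hxy), sign_neg (sub_neg.2 (hf hx hy hxy))]
  · simp only [sub_self]
  · rw [sign_pos (sub_pos.2 hxy), sign_pos (sub_pos.2 (hf hy hx hxy))]

namespace IsSymmetricDensity

variable {f g : ℝ → ℝ}

lemma integral_sub_eq_zero (hf : IsSymmetricDensity f) (hg : IsSymmetricDensity g) :
    ∫ x, (f - g) x = 0 := by
  simp only [Pi.sub_apply]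
  rw [integral_sub hf.integrable hg.integrable, hf.integral_eq_one, hg.integral_eq_one, sub_self]

lemma alternatesOn_sub_of_callPrice (hf : IsSymmetricDensity f) (hg : IsSymmetricDensity g)
    (h₀ : f 0 ≤ g 0) {m n : ℕ} (hm : Even m) (hnm : n ≤ m + 2)
    (h : AlternatesOn (fun κ => callPrice (f - g) (Real.exp κ)) univ (m + n)) :
    AlternatesOn (f - g) (Ioi 0) n := by
  have hs := hf.symmetric.sub hg.symmetric
  have hint := hf.integrable.sub hg.integrable
  have hzero := hf.integral_sub_eq_zero hg
  have halt := h.of_callPrice (hf.continuous.sub hg.continuous) hint (hs.integrable_exp_mul hint)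
    hzero (hs.integral_exp_mul.trans hzero)
  rw [add_right_comm] at halt
  exact halt.Ioi_zero_of_univ (hm.add even_two) hnm hs.sign_neg (sub_nonpos.2 h₀)

end IsSymmetricDensity

/-- `σ` is the implied volatility smile of the log-price density `f`: the Black–Scholes price with
total volatility `σ K` reproduces the call price at every strike `K > 0`. -/
structure IsImpliedVol (f σ : ℝ → ℝ) : Prop where
  pos : ∀ K > 0, 0 < σ K
  callPrice_eq : ∀ K > 0, callPrice f K = callBS K (σ K)

/-- A smile `σ` is W-shaped if at some level `σ_*` the difference `σ - σ_*` has the sign sequence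
`+, -, +, -, +` on `(0, ∞)` and no longer one. -/
def IsWShaped (σ : ℝ → ℝ) : Prop :=
  ∃ σstar > (0 : ℝ),
    (∃ K0 K1 K2 K3 K4 : ℝ, 0 < K0 ∧ K0 < K1 ∧ K1 < K2 ∧ K2 < K3 ∧ K3 < K4 ∧
      σstar < σ K0 ∧ σ K1 < σstar ∧ σstar < σ K2 ∧ σ K3 < σstar ∧ σstar < σ K4) ∧
    ¬∃ x : Fin 6 → ℝ, StrictMono x ∧ 0 < x 0 ∧
      ∀ i : Fin 5, (σ (x i.castSucc) - σstar) * (σ (x i.succ) - σstar) < 0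

namespace IsImpliedVol

variable {f σv : ℝ → ℝ} {σ δ : ℝ}

lemma sign_callPrice_sub (h : IsImpliedVol f σv) (hf : IsSymmetricDensity f) (hσ : 0 < σ) (κ : ℝ) :
    SignType.sign (callPrice (f - bsDensity σ) (Real.exp κ)) =
      SignType.sign (σv (Real.exp κ) - σ) := by
  have hg := isSymmetricDensity_bsDensity hσ
  have hK := Real.exp_pos κ
  rw [callPrice_sub hf.integrable hf.integrable_exp_mul hg.integrable hg.integrable_exp_mul,
    h.callPrice_eq _ hK, ← callBS_eq_callPrice hK hσ]
  exact sign_sub_of_strictMonoOn (strictMonoOn_callBS hK) (h.pos _ hK) hσ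

lemma lt_iff (h : IsImpliedVol f σv) (hf : IsSymmetricDensity f) (hσ : 0 < σ) {κ : ℝ} :
    σ < σv (Real.exp κ) ↔ 0 < callPrice (f - bsDensity σ) (Real.exp κ) := by
  rw [← sub_pos, ← sign_eq_one_iff, ← h.sign_callPrice_sub hf hσ, sign_eq_one_iff]

lemma gt_iff (h : IsImpliedVol f σv) (hf : IsSymmetricDensity f) (hσ : 0 < σ) {κ : ℝ} :
    σv (Real.exp κ) < σ ↔ callPrice (f - bsDensity σ) (Real.exp κ) < 0 := by
  rw [← sub_neg, ← sign_eq_neg_one_iff, ← h.sign_callPrice_sub hf hσ, sign_eq_neg_one_iff]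

lemma exp_neg (h : IsImpliedVol f σv) (hf : IsSymmetricDensity f) (κ : ℝ) :
    σv (Real.exp (-κ)) = σv (Real.exp κ) := by
  have hσ := h.pos _ (Real.exp_pos κ)
  have hg := isSymmetricDensity_bsDensity hσ
  have hsign := h.sign_callPrice_sub hf hσ (-κ)
  rw [(hf.symmetric.sub hg.symmetric).callPrice_exp_neg (hf.integrable.sub hg.integrable)
    (hf.integral_sub_eq_zero hg), sign_mul, sign_pos (Real.exp_pos _), one_mul,
    h.sign_callPrice_sub hf hσ, sub_self, sign_zero, eq_comm, sign_eq_zero_iff] at hsign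
  exact sub_eq_zero.1 hsign

lemma exp_lt_one (h : IsImpliedVol f σv) (hf : IsSymmetricDensity f) (hδ : 0 < δ)
    (hnear : ∀ x, |x| ≤ δ → f x < bsDensity (σv 1) x) : σv (Real.exp δ) < σv 1 := by
  have hσ := h.pos 1 one_pos
  have hg := isSymmetricDensity_bsDensity hσ
  refine (h.gt_iff hf hσ).2 ((hf.symmetric.sub hg.symmetric).callPrice_exp_lt_zero
    (hf.integrable.sub hg.integrable) (hf.integral_sub_eq_zero hg) ?_ hδ fun x hx =>
      sub_neg.2 (hnear x (abs_le.2 ⟨by linarith [hx.1], hx.2.le⟩)))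
  have hatm := h.sign_callPrice_sub hf hσ 0
  rwa [Real.exp_zero, sub_self, sign_zero, sign_eq_zero_iff] at hatm

lemma eventually_lt (h : IsImpliedVol f σv) (hf : IsSymmetricDensity f) (hσ : 0 < σ)
    (htail : ∀ᶠ x in atTop, bsDensity σ x < f x) : ∀ᶠ κ in atTop, σ < σv (Real.exp κ) := by
  have hg := isSymmetricDensity_bsDensity hσ
  obtain ⟨X, hX⟩ := htail.exists_forall_of_atTop
  filter_upwards [eventually_ge_atTop X] with κ hκ
  exact (h.lt_iff hf hσ).2 (callPrice_exp_pos (hf.integrable.sub hg.integrable)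
    ((hf.symmetric.sub hg.symmetric).integrable_exp_mul (hf.integrable.sub hg.integrable))
    fun x hx => sub_pos.2 (hX x (hκ.trans hx.le)))

lemma alternatesOn_exp (h : IsImpliedVol f σv) (hf : IsSymmetricDensity f) {x : Fin 6 → ℝ}
    (hx : StrictMono x) (hx₀ : 0 < x 0)
    (halt : ∀ i : Fin 5, (σv (x i.castSucc) - σ) * (σv (x i.succ) - σ) < 0) :
    AlternatesOn (fun κ => σv (Real.exp κ) - σ) univ 5 := by
  have hpos : ∀ i, 0 < x i := fun i => hx₀.trans_le (hx.monotone (Fin.zero_le i))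
  let y : ℕ → ℝ := fun i => Real.log (x (Fin.ofNat 6 i))
  have hy : ∀ i, Real.exp (y i) = x (Fin.ofNat 6 i) := fun i => Real.exp_log (hpos _)
  have hcast : ∀ i (hi : i < 5), Fin.ofNat 6 i = (⟨i, hi⟩ : Fin 5).castSucc ∧
      Fin.ofNat 6 (i + 1) = (⟨i, hi⟩ : Fin 5).succ := fun i hi =>
    ⟨Fin.ext (Nat.mod_eq_of_lt (by lia)), Fin.ext (Nat.mod_eq_of_lt (by lia))⟩
  have hmono : ∀ i < 5, y i < y (i + 1) := fun i hi => by
    refine Real.log_lt_log (hpos _) (hx ?_)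
    rw [(hcast i hi).1, (hcast i hi).2]
    exact Fin.castSucc_lt_succ
  have hsign : ∀ i < 5, (σv (Real.exp (y i)) - σ) * (σv (Real.exp (y (i + 1))) - σ) < 0 :=
    fun i hi => by
      rw [hy, hy, (hcast i hi).1, (hcast i hi).2]
      exact halt ⟨i, hi⟩
  have hne : σv (Real.exp (y 0)) - σ ≠ 0 := left_ne_zero_of_mul (hsign 0 (by norm_num)).ne
  refine (AlternatesOn.or_neg_of_mul_neg (f := fun κ => σv (Real.exp κ) - σ)
    (fun i _ => mem_univ (y i)) hmono hsign hne).elim id fun hneg => ?_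
  exact hneg.of_neg_comp_neg (by decide) fun κ => by simp only [h.exp_neg hf]

lemma alternatesOn_sub_bsDensity (h : IsImpliedVol f σv) (hf : IsSymmetricDensity f) (hσ : 0 < σ)
    (h₀ : f 0 < bsDensity σ 0) (htail : ∀ᶠ x in atTop, bsDensity σ x < f x)
    (halt : AlternatesOn (fun κ => σv (Real.exp κ) - σ) univ 5) :
    AlternatesOn (f - bsDensity σ) (Ioi 0) 4 := by
  have hcall : AlternatesOn (fun κ => callPrice (f - bsDensity σ) (Real.exp κ)) univ (2 + 3) :=
    halt.congr_sign fun κ _ => h.sign_callPrice_sub hf hσ κ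
  have hthree := hf.alternatesOn_sub_of_callPrice (isSymmetricDensity_bsDensity hσ) h₀.le
    even_two (by norm_num) hcall
  refine hthree.succ_of_eventually_pos (by decide) ?_
  filter_upwards [htail, eventually_gt_atTop 0] with x hx hx₀
  exact ⟨hx₀, sub_pos.2 hx⟩

-- The level is chosen slightly below the at-the-money volatility, where the smile has a local peak.
theorem isWShaped (h : IsImpliedVol f σv) (hf : IsSymmetricDensity f) (hδ : 0 < δ)
    (hnear : ∀ᶠ σ in 𝓝[≤] σv 1, (∀ x, |x| ≤ δ → f x < bsDensity σ x) ∧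
      ¬AlternatesOn (f - bsDensity σ) (Ioi 0) 4)
    (htail : ∀ σ > 0, ∀ᶠ x in atTop, bsDensity σ x < f x) : IsWShaped σv := by
  have hδv : σv (Real.exp δ) < σv 1 :=
    h.exp_lt_one hf hδ (hnear.self_of_nhdsWithin self_mem_Iic).1
  have hbelow := hnear.filter_mono (nhdsWithin_mono _ Iio_subset_Iic_self)
  obtain ⟨σ, ⟨hnearσ, hnot⟩, hσδ, hσv⟩ := (hbelow.and (Ioo_mem_nhdsLT hδv)).exists
  have hσ₀ : 0 < σ := (h.pos _ (Real.exp_pos δ)).trans hσδ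
  obtain ⟨X, hX, hδX⟩ :=
    ((h.eventually_lt hf hσ₀ (htail σ hσ₀)).and (eventually_gt_atTop δ)).exists
  refine ⟨σ, hσ₀, ⟨Real.exp (-X), Real.exp (-δ), 1, Real.exp δ, Real.exp X, Real.exp_pos _,
    Real.exp_lt_exp.2 (neg_lt_neg hδX), Real.exp_lt_one_iff.2 (neg_neg_of_pos hδ),
    Real.one_lt_exp_iff.2 hδ, Real.exp_lt_exp.2 hδX, ?_, ?_, hσv, hσδ, hX⟩, ?_⟩
  · rwa [h.exp_neg hf]
  · rwa [h.exp_neg hf]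
  · rintro ⟨x, hx, hx₀, halt⟩
    exact hnot (h.alternatesOn_sub_bsDensity hf hσ₀ (hnearσ 0 (by simpa using hδ.le))
      (htail σ hσ₀) (h.alternatesOn_exp hf hx hx₀ halt))

end IsImpliedVol

/-! ### Symmetric densities with an even profile -/

/-- The put–call symmetric function `N e^{-x/2} p(x)` with profile `p` and normalising constant `N`.
Every density of the model has this form, with an even profile. -/
noncomputable def tilt (N : ℝ) (p : ℝ → ℝ) (x : ℝ) : ℝ :=
  N * (Real.exp (-x / 2) * p x)

section Tilt

variable {p : ℝ → ℝ} {N σ : ℝ}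

lemma isPutCallSymmetric_tilt (N : ℝ) (hp : ∀ x, p (-x) = p x) : IsPutCallSymmetric (tilt N p) :=
  fun x => by
    rw [tilt, tilt, hp, mul_left_comm (Real.exp x), ← mul_assoc (Real.exp x), ← Real.exp_add]
    ring_nf

lemma isSymmetricDensity_tilt (hN : 0 ≤ N) (hcont : Continuous p) (hnonneg : ∀ x, 0 ≤ p x)
    (heven : ∀ x, p (-x) = p x) (hint : Integrable fun x => Real.exp (-x / 2) * p x)
    (hmass : N * ∫ x, Real.exp (-x / 2) * p x = 1) : IsSymmetricDensity (tilt N p) where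
  continuous := by unfold tilt; fun_prop
  nonneg x := mul_nonneg hN (mul_nonneg (Real.exp_pos _).le (hnonneg x))
  integrable := hint.const_mul N
  integral_eq_one := by simp only [tilt, integral_const_mul, hmass]
  symmetric := isPutCallSymmetric_tilt N heven

lemma halfMoment_tilt (N : ℝ) (p : ℝ → ℝ) : halfMoment (tilt N p) = N * ∫ x, p x := by
  rw [halfMoment, ← integral_const_mul]
  congr with x
  rw [tilt, mul_left_comm, ← mul_assoc (Real.exp _), ← Real.exp_add, neg_div, add_neg_cancel,
    Real.exp_zero, one_mul]

lemma bsDensity_eq_tilt (hσ : 0 < σ) : bsDensity σ =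
    tilt (√(2 * Real.pi) * σ)⁻¹ fun x => Real.exp (-x ^ 2 / (2 * σ ^ 2) - σ ^ 2 / 8) := by
  ext x
  rw [bsDensity_apply hσ, tilt, ← Real.exp_add]
  ring_nf

lemma eventually_bsDensity_lt_tilt {C c : ℝ} (hN : 0 < N) (hc : 0 < c)
    (hp : ∀ x ≥ 1, c * Real.exp (-C * x) ≤ p x) (hσ : 0 < σ) :
    ∀ᶠ x in atTop, bsDensity σ x < tilt N p x := by
  have hexponent : Tendsto (fun x : ℝ => x * (x / (2 * σ ^ 2) - C) + σ ^ 2 / 8) atTop atTop :=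
    tendsto_atTop_add_const_right _ _ (tendsto_id.atTop_mul_atTop₀
      (tendsto_atTop_add_const_right _ _ (tendsto_id.atTop_div_const (by positivity))))
  have hratio := (Real.tendsto_exp_atTop.comp hexponent).eventually_gt_atTop
    ((√(2 * Real.pi) * σ)⁻¹ / (N * c))
  filter_upwards [hratio, eventually_ge_atTop 1] with x hx hx₁
  rw [Function.comp_apply, div_lt_iff₀ (by positivity)] at hx
  have hsplit : Real.exp (-C * x) = Real.exp (x * (x / (2 * σ ^ 2) - C) + σ ^ 2 / 8) *
      Real.exp (-x ^ 2 / (2 * σ ^ 2) - σ ^ 2 / 8) := by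
    rw [← Real.exp_add]
    ring_nf
  calc bsDensity σ x
      = (√(2 * Real.pi) * σ)⁻¹ *
          (Real.exp (-x / 2) * Real.exp (-x ^ 2 / (2 * σ ^ 2) - σ ^ 2 / 8)) := by
        rw [bsDensity_eq_tilt hσ, tilt]
    _ < Real.exp (x * (x / (2 * σ ^ 2) - C) + σ ^ 2 / 8) * (N * c) *
          (Real.exp (-x / 2) * Real.exp (-x ^ 2 / (2 * σ ^ 2) - σ ^ 2 / 8)) := by gcongr
    _ = N * (Real.exp (-x / 2) * (c * Real.exp (-C * x))) := by rw [hsplit]; ring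
    _ ≤ tilt N p x := by rw [tilt]; gcongr; exact hp x hx₁

lemma exists_pos_forall_tilt_lt_bsDensity {m : ℝ} (hm : 0 < m) (M : ℝ) :
    ∃ ε > 0, ∀ N p, ∀ σ ∈ Icc (m / 2) M, ∀ x, |x| ≤ m → N * p x < ε →
      tilt N p x < bsDensity σ x := by
  rcases lt_or_ge M (m / 2) with hmM | hmM
  · exact ⟨1, one_pos, fun N p σ hσ => absurd (hσ.1.trans hσ.2) hmM.not_ge⟩
  have hM : 0 < M := (half_pos hm).trans_le hmM
  refine ⟨(√(2 * Real.pi) * M)⁻¹ * Real.exp (-2 - M ^ 2 / 8), by positivity,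
    fun N p σ hσ x hx hNp => ?_⟩
  have hσ₀ : 0 < σ := (half_pos hm).trans_le hσ.1
  have hσM := hσ.2
  have hxσ : x ^ 2 ≤ (2 * σ) ^ 2 := sq_le_sq' (by linarith [neg_abs_le x, hσ.1])
    (by linarith [le_abs_self x, hσ.1])
  have hquot : x ^ 2 / (2 * σ ^ 2) ≤ 2 := by
    rw [div_le_iff₀ (by positivity)]
    linarith
  rw [bsDensity_eq_tilt hσ₀, tilt, tilt, mul_left_comm, mul_left_comm _ (Real.exp _)]
  refine mul_lt_mul_of_pos_left (hNp.trans_le ?_) (Real.exp_pos _)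
  gcongr
  rw [neg_div]
  linarith

lemma hasDerivAt_log_bsDensity (hσ : 0 < σ) (x : ℝ) :
    HasDerivAt (fun x => Real.log (bsDensity σ x)) (-x / σ ^ 2 - 1 / 2) x := by
  have hlog : ∀ x, Real.log (bsDensity σ x) =
      Real.log (√(2 * Real.pi) * σ)⁻¹ + (-x ^ 2 / (2 * σ ^ 2) - x / 2 - σ ^ 2 / 8) := fun x => by
    rw [bsDensity_apply hσ, Real.log_mul (by positivity) (Real.exp_pos _).ne', Real.log_exp]
  simp only [hlog]
  have hquad : HasDerivAt (fun x : ℝ => -x ^ 2 / (2 * σ ^ 2) - x / 2 - σ ^ 2 / 8)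
      (-(2 * x) / (2 * σ ^ 2) - 1 / 2) x := by
    simpa using ((((hasDerivAt_pow 2 x).neg).div_const (2 * σ ^ 2)).sub
      ((hasDerivAt_id x).div_const 2)).sub_const (σ ^ 2 / 8)
  refine (hquad.const_add _).congr_deriv ?_
  field_simp

lemma hasDerivAt_log_tilt {y x : ℝ} (hN : 0 < N) (hpos : ∀ᶠ x in 𝓝 x, 0 < p x)
    (hd : HasDerivAt (fun x => Real.log (p x)) y x) :
    HasDerivAt (fun x => Real.log (tilt N p x)) (y - 1 / 2) x := by
  have hlog : (fun x => Real.log (tilt N p x)) =ᶠ[𝓝 x]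
      fun x => Real.log N + (-x / 2 + Real.log (p x)) := by
    filter_upwards [hpos] with z hz
    rw [tilt, Real.log_mul hN.ne' (by positivity), Real.log_mul (Real.exp_pos _).ne' hz.ne',
      Real.log_exp]
  refine ((((hasDerivAt_id x).neg.div_const 2).add hd).const_add _).congr_of_eventuallyEq hlog
    |>.congr_deriv ?_
  ring

lemma AlternatesOn.log_sub_log {f g : ℝ → ℝ} {s : Set ℝ} {n : ℕ} (h : AlternatesOn (f - g) s n)
    (hf : ∀ x ∈ s, 0 < f x) (hg : ∀ x ∈ s, 0 < g x) :
    AlternatesOn (fun x => Real.log (f x) - Real.log (g x)) s n :=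
  h.congr_sign fun x hx => sign_sub_of_strictMonoOn Real.strictMonoOn_log (hf x hx) (hg x hx)

lemma AlternatesOn.neg_deriv_log_tilt {y : ℝ → ℝ} {s : Set ℝ} [s.OrdConnected] {n : ℕ}
    (h : AlternatesOn (tilt N p - bsDensity σ) s (n + 1)) (hN : 0 < N) (hσ : 0 < σ)
    (hs : IsOpen s) (hpos : ∀ x ∈ s, 0 < p x)
    (hd : ∀ x ∈ s, HasDerivAt (fun x => Real.log (p x)) (y x) x) :
    AlternatesOn (fun x => -(y x + x / σ ^ 2)) s n := by
  refine (h.log_sub_log (fun x hx => mul_pos hN (mul_pos (Real.exp_pos _) (hpos x hx)))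
    fun x _ => bsDensity_pos hσ x).neg_deriv fun x hx => ?_
  refine ((hasDerivAt_log_tilt hN ((hs.eventually_mem hx).mono hpos) (hd x hx)).sub
    (hasDerivAt_log_bsDensity hσ x)).congr_deriv ?_
  ring

end Tilt

lemma integrable_of_Ioi_of_comp_neg {f : ℝ → ℝ} (hpos : IntegrableOn f (Ioi 0))
    (hneg : IntegrableOn (fun x => f (-x)) (Ioi 0)) : Integrable f := by
  have hIic : IntegrableOn f (Iic 0) := by
    rw [← neg_zero, ← integrableOn_Ici_iff_integrableOn_Ioi] at hneg
    simpa using hneg.comp_neg_Iic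
  simpa using hIic.union hpos

lemma integral_eq_integral_Ioi_add_comp_neg {f : ℝ → ℝ} (hf : Integrable f) :
    ∫ x, f x = (∫ x in Ioi 0, f x) + ∫ x in Ioi 0, f (-x) := by
  rw [integral_comp_neg_Ioi, neg_zero, add_comm]
  exact (intervalIntegral.integral_Iic_add_Ioi hf.integrableOn hf.integrableOn).symm

lemma integrableOn_rpow_mul_exp_neg_mul {s r : ℝ} (hs : -1 < s) (hr : 0 < r) :
    IntegrableOn (fun t : ℝ => t ^ s * Real.exp (-(r * t))) (Ioi 0) := by
  simpa using integrableOn_rpow_mul_exp_neg_mul_rpow hs one_pos hr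

/-! ### The double gamma density -/

/-- The even profile `|x|^{α-1} e^{-κ|x|}` of the double gamma density. -/
noncomputable def doubleGammaProfile (α κ x : ℝ) : ℝ :=
  |x| ^ (α - 1) * Real.exp (-(κ * |x|))

section DoubleGammaProfile

variable {α κ σ : ℝ}

lemma doubleGammaProfile_neg (α κ x : ℝ) :
    doubleGammaProfile α κ (-x) = doubleGammaProfile α κ x := by
  simp only [doubleGammaProfile, abs_neg]

lemma continuous_doubleGammaProfile (hα : 1 ≤ α) (κ : ℝ) : Continuous (doubleGammaProfile α κ) := by
  have : Continuous fun x : ℝ => |x| ^ (α - 1) :=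
    continuous_abs.rpow_const fun _ => Or.inr (sub_nonneg.2 hα)
  unfold doubleGammaProfile
  fun_prop

lemma doubleGammaProfile_nonneg (α κ x : ℝ) : 0 ≤ doubleGammaProfile α κ x := by
  unfold doubleGammaProfile
  positivity

lemma doubleGammaProfile_pos {x : ℝ} (hx : 0 < x) : 0 < doubleGammaProfile α κ x := by
  unfold doubleGammaProfile
  positivity

lemma exp_mul_doubleGammaProfile (θ : ℝ) {x : ℝ} (hx : 0 < x) :
    Real.exp (θ * x) * doubleGammaProfile α κ x = x ^ (α - 1) * Real.exp (-((κ - θ) * x)) := by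
  rw [doubleGammaProfile, abs_of_pos hx, mul_left_comm, ← Real.exp_add]
  ring_nf

lemma exp_mul_neg_mul_doubleGammaProfile_neg (θ : ℝ) {x : ℝ} (hx : 0 < x) :
    Real.exp (θ * -x) * doubleGammaProfile α κ (-x) =
      x ^ (α - 1) * Real.exp (-((κ + θ) * x)) := by
  rw [doubleGammaProfile_neg, mul_neg, ← neg_mul, exp_mul_doubleGammaProfile _ hx, sub_neg_eq_add]

lemma integrable_exp_mul_doubleGammaProfile (hα : 0 < α) {θ : ℝ} (hθ : |θ| < κ) :
    Integrable fun x => Real.exp (θ * x) * doubleGammaProfile α κ x := by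
  obtain ⟨hκ, hκ'⟩ := abs_lt.1 hθ
  refine integrable_of_Ioi_of_comp_neg ?_ ?_
  · exact (integrableOn_rpow_mul_exp_neg_mul (by linarith) (sub_pos.2 hκ')).congr_fun
      (fun x hx => (exp_mul_doubleGammaProfile θ hx).symm) measurableSet_Ioi
  · exact (integrableOn_rpow_mul_exp_neg_mul (r := κ + θ) (by linarith) (by linarith)).congr_fun
      (fun x hx => (exp_mul_neg_mul_doubleGammaProfile_neg θ hx).symm) measurableSet_Ioi

lemma integral_exp_mul_doubleGammaProfile (hα : 0 < α) {θ : ℝ} (hθ : |θ| < κ) :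
    ∫ x, Real.exp (θ * x) * doubleGammaProfile α κ x =
      ((1 / (κ - θ)) ^ α + (1 / (κ + θ)) ^ α) * Real.Gamma α := by
  obtain ⟨hκ, hκ'⟩ := abs_lt.1 hθ
  rw [integral_eq_integral_Ioi_add_comp_neg (integrable_exp_mul_doubleGammaProfile hα hθ),
    setIntegral_congr_fun measurableSet_Ioi fun x hx => exp_mul_doubleGammaProfile θ hx,
    setIntegral_congr_fun measurableSet_Ioi fun x hx =>
      exp_mul_neg_mul_doubleGammaProfile_neg θ hx,
    Real.integral_rpow_mul_exp_neg_mul_Ioi hα (by linarith),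
    Real.integral_rpow_mul_exp_neg_mul_Ioi hα (by linarith), add_mul]

lemma hasDerivAt_log_doubleGammaProfile (α κ : ℝ) {x : ℝ} (hx : 0 < x) :
    HasDerivAt (fun x => Real.log (doubleGammaProfile α κ x)) ((α - 1) / x - κ) x := by
  have hlog : (fun x => Real.log (doubleGammaProfile α κ x)) =ᶠ[𝓝 x]
      fun x => (α - 1) * Real.log x - κ * x := by
    filter_upwards [eventually_gt_nhds hx] with z hz
    rw [doubleGammaProfile, abs_of_pos hz, Real.log_mul (by positivity) (Real.exp_pos _).ne',
      Real.log_exp, Real.log_rpow hz, ← sub_eq_add_neg]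
  refine ((((Real.hasDerivAt_log hx.ne').const_mul (α - 1)).sub
    ((hasDerivAt_id x).const_mul κ)).congr_of_eventuallyEq hlog).congr_deriv ?_
  rw [mul_one, div_eq_mul_inv]

-- `x` times the derivative of the log-ratio is the quadratic `α - 1 - κ x + x² / σ²`.
lemma not_alternatesOn_tilt_doubleGammaProfile_sub_bsDensity {N : ℝ} (hN : 0 < N) (hσ : 0 < σ) :
    ¬AlternatesOn (tilt N (doubleGammaProfile α κ) - bsDensity σ) (Ioi 0) 4 := fun h => by
  have hderiv := h.neg_deriv_log_tilt (n := 3) hN hσ isOpen_Ioi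
    (fun _ => doubleGammaProfile_pos) fun _ => hasDerivAt_log_doubleGammaProfile α κ
  have hquad : AlternatesOn (fun x => -(α - 1) + κ * x - (σ ^ 2)⁻¹ * x ^ 2) (Ioi 0) 3 := by
    refine .of_pos_mul (c := fun x => x⁻¹) ?_ fun x hx => inv_pos.2 hx
    refine hderiv.congr_sign fun x hx => ?_
    have hx₀ : x ≠ 0 := (mem_Ioi.1 hx).ne'
    congr 1
    field_simp
    ring
  refine not_alternatesOn_of_concaveOn ?_ (hquad.of_le (by norm_num))
  have hsq : ConvexOn ℝ (Ioi (0 : ℝ)) fun x => (σ ^ 2)⁻¹ * x ^ 2 :=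
    ((convexOn_pow 2).subset Ioi_subset_Ici_self (convex_Ioi 0)).smul (by positivity)
  have hlin : ConcaveOn ℝ (Ioi (0 : ℝ)) fun x => -(α - 1) + κ * x := by
    refine ⟨convex_Ioi 0, fun x _ y _ a b _ _ hab => le_of_eq ?_⟩
    simp only [smul_eq_mul]
    linear_combination (-(α - 1)) * hab
  exact hlin.sub hsq

lemma exp_neg_le_doubleGammaProfile (hα : 1 ≤ α) (κ : ℝ) {x : ℝ} (hx : 1 ≤ x) :
    Real.exp (-κ * x) ≤ doubleGammaProfile α κ x := by
  rw [doubleGammaProfile, abs_of_pos (by linarith), neg_mul]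
  exact le_mul_of_one_le_left (Real.exp_pos _).le (Real.one_le_rpow hx (sub_nonneg.2 hα))

lemma tendsto_doubleGammaProfile_zero (hα : 1 < α) (κ : ℝ) :
    Tendsto (doubleGammaProfile α κ) (𝓝 0) (𝓝 0) := by
  have h := (continuous_doubleGammaProfile hα.le κ).tendsto 0
  rwa [doubleGammaProfile, abs_zero, Real.zero_rpow (sub_pos.2 hα).ne', zero_mul] at h

end DoubleGammaProfile

/-! ### A Bessel-type integral -/

/-- The integrand `l^γ e^{-A/l - q l}` of `besselIntegral`. -/
noncomputable def besselKernel (q γ A l : ℝ) : ℝ := l ^ γ * Real.exp (-(A / l) - q * l)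

/-- The integral `∫₀^∞ l^γ e^{-A/l - q l} dl`, which for `A > 0` equals
`2 (A/q)^{(γ+1)/2} K_{γ+1}(2 √(A q))` in terms of the Macdonald function `K`. -/
noncomputable def besselIntegral (q γ A : ℝ) : ℝ := ∫ l in Ioi 0, besselKernel q γ A l

/-- The logarithmic derivative of `x ↦ besselIntegral q γ (w x²)`. -/
noncomputable def besselLogDeriv (w q γ x : ℝ) : ℝ :=
  -(2 * w * x) * besselIntegral q (γ - 1) (w * x ^ 2) / besselIntegral q γ (w * x ^ 2)

section Bessel

variable {q A w x l : ℝ} (γ : ℝ)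

lemma besselKernel_pos (q A : ℝ) (hl : 0 < l) : 0 < besselKernel q γ A l :=
  mul_pos (Real.rpow_pos_of_pos hl γ) (Real.exp_pos _)

lemma continuousOn_besselKernel (q A : ℝ) : ContinuousOn (besselKernel q γ A) (Ioi 0) :=
  fun l hl => by
    have hl₀ : l ≠ 0 := (mem_Ioi.1 hl).ne'
    have hpow : ContinuousAt (fun l : ℝ => l ^ γ) l := Real.continuousAt_rpow_const _ _ (.inl hl₀)
    have : ContinuousAt (fun l : ℝ => A / l) l := continuousAt_const.div continuousAt_id hl₀
    unfold besselKernel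
    exact ContinuousAt.continuousWithinAt (by fun_prop)

lemma aestronglyMeasurable_besselKernel (q A : ℝ) :
    AEStronglyMeasurable (besselKernel q γ A) (volume.restrict (Ioi 0)) :=
  (continuousOn_besselKernel γ q A).aestronglyMeasurable measurableSet_Ioi

variable {γ} in
lemma integrableOn_besselKernel_of_neg_one_lt (hq : 0 < q) (hγ : -1 < γ) (hA : 0 ≤ A) :
    IntegrableOn (besselKernel q γ A) (Ioi 0) := by
  refine (integrableOn_rpow_mul_exp_neg_mul hγ hq).mono'
    (aestronglyMeasurable_besselKernel γ q A) ?_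
  refine (ae_restrict_iff' measurableSet_Ioi).2 (.of_forall fun l (hl : 0 < l) => ?_)
  rw [Real.norm_of_nonneg (besselKernel_pos γ q A hl).le, besselKernel]
  have : 0 ≤ A / l := by positivity
  gcongr
  linarith

lemma besselKernel_le (q : ℝ) (hA : 0 < A) (n : ℕ) (hl : 0 < l) : besselKernel q γ A l ≤
    n.factorial / A ^ n * (l ^ (γ + n) * Real.exp (-(q * l))) := by
  have hexp : Real.exp (-(A / l)) ≤ n.factorial / A ^ n * l ^ n := by
    rw [Real.exp_neg, inv_le_comm₀ (Real.exp_pos _) (by positivity)]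
    refine le_of_eq_of_le ?_ (Real.pow_div_factorial_le_exp (A / l) (by positivity) n)
    rw [div_pow]
    field_simp
  calc besselKernel q γ A l
      = l ^ γ * (Real.exp (-(A / l)) * Real.exp (-(q * l))) := by
        rw [besselKernel, sub_eq_add_neg, Real.exp_add]
    _ ≤ l ^ γ * (n.factorial / A ^ n * l ^ n * Real.exp (-(q * l))) := by gcongr
    _ = _ := by rw [Real.rpow_add_natCast hl.ne']; ring

lemma integrableOn_besselKernel (hq : 0 < q) (hA : 0 < A) :
    IntegrableOn (besselKernel q γ A) (Ioi 0) := by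
  obtain ⟨n, hn⟩ := exists_nat_gt (-1 - γ)
  refine ((integrableOn_rpow_mul_exp_neg_mul (s := γ + n) (by linarith) hq).const_mul
    (n.factorial / A ^ n)).mono' (aestronglyMeasurable_besselKernel γ q A) ?_
  refine (ae_restrict_iff' measurableSet_Ioi).2 (.of_forall fun l hl => ?_)
  rw [Real.norm_of_nonneg (besselKernel_pos γ q A hl).le]
  exact besselKernel_le γ q hA n hl

lemma besselIntegral_nonneg (q A : ℝ) : 0 ≤ besselIntegral q γ A :=
  setIntegral_nonneg measurableSet_Ioi fun _ hl => (besselKernel_pos γ q A hl).le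

lemma besselIntegral_pos (hq : 0 < q) (hA : 0 < A) : 0 < besselIntegral q γ A :=
  setIntegral_pos_of_forall_pos measurableSet_Ioi (by simp) (integrableOn_besselKernel γ hq hA)
    fun _ hl => besselKernel_pos γ q A hl

lemma tendsto_besselKernel_zero (q : ℝ) (hA : 0 < A) :
    Tendsto (besselKernel q γ A) (𝓝[>] 0) (𝓝 0) := by
  obtain ⟨n, hn⟩ := exists_nat_gt (-γ)
  have hbound : Tendsto (fun l : ℝ => n.factorial / A ^ n * (l ^ (γ + n) * Real.exp (-(q * l))))
      (𝓝 0) (𝓝 0) := by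
    have hpow : ContinuousAt (fun l : ℝ => l ^ (γ + n)) 0 :=
      Real.continuousAt_rpow_const _ _ (.inr (by linarith))
    have hcont : ContinuousAt
        (fun l : ℝ => n.factorial / A ^ n * (l ^ (γ + n) * Real.exp (-(q * l)))) 0 := by fun_prop
    simpa [ContinuousAt, Real.zero_rpow (show γ + n ≠ 0 by linarith)] using hcont
  refine squeeze_zero' ?_ ?_ (hbound.mono_left nhdsWithin_le_nhds)
  · exact eventually_mem_nhdsWithin.mono fun l hl => (besselKernel_pos γ q A hl).le
  · exact eventually_mem_nhdsWithin.mono fun l hl => besselKernel_le γ q hA n hl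

lemma hasDerivAt_besselKernel (q A : ℝ) (hl : 0 < l) : HasDerivAt (besselKernel q γ A)
    (γ * besselKernel q (γ - 1) A l + A * besselKernel q (γ - 2) A l - q * besselKernel q γ A l)
    l := by
  have hexponent : HasDerivAt (fun l : ℝ => -(A / l) - q * l) (A / l ^ 2 - q) l := by
    simpa [div_eq_mul_inv] using
      ((hasDerivAt_inv hl.ne').const_mul A).fun_neg.fun_sub ((hasDerivAt_id l).const_mul q)
  refine ((Real.hasDerivAt_rpow_const (Or.inl hl.ne')).mul hexponent.exp).congr_deriv ?_
  have hpow : l ^ (γ - 2) = l ^ γ / l ^ 2 := by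
    rw [Real.rpow_sub hl, Real.rpow_two]
  rw [besselKernel, besselKernel, besselKernel, hpow]
  ring

lemma besselIntegral_recurrence (hq : 0 < q) (hA : 0 < A) :
    γ * besselIntegral q (γ - 1) A + A * besselIntegral q (γ - 2) A =
      q * besselIntegral q γ A := by
  have hint := integrableOn_besselKernel γ hq hA
  have hint₁ := (integrableOn_besselKernel (γ - 1) hq hA).const_mul γ
  have hint₂ := (integrableOn_besselKernel (γ - 2) hq hA).const_mul A
  have hint₁₂ : IntegrableOn
      (fun l => γ * besselKernel q (γ - 1) A l + A * besselKernel q (γ - 2) A l) (Ioi 0) :=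
    hint₁.add hint₂
  have hint' := hint₁₂.sub (hint.const_mul q)
  have hderiv : ∀ l ∈ Ioi 0, HasDerivAt (besselKernel q γ A) _ l :=
    fun l hl => hasDerivAt_besselKernel γ q A hl
  have htop : Tendsto (besselKernel q γ A) atTop (𝓝 0) :=
    tendsto_zero_of_hasDerivAt_of_integrableOn_Ioi hderiv hint' hint
  have hftc := integral_Ioi_deriv_mul_eq_sub (u := 1) (u' := 0) (a' := 0) (b' := 0)
    (fun x _ => hasDerivAt_const x (1 : ℝ)) hderiv
    (by rw [zero_mul, zero_add, one_mul]; exact hint')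
    (by simpa using tendsto_besselKernel_zero γ q hA) (by simpa using htop)
  simp only [Pi.zero_apply, Pi.one_apply, zero_mul, one_mul, zero_add, sub_zero] at hftc
  rw [integral_sub hint₁₂ (hint.const_mul q), integral_add hint₁ hint₂,
    integral_const_mul, integral_const_mul, integral_const_mul] at hftc
  exact sub_eq_zero.1 hftc

lemma hasDerivAt_besselKernel_param (q A : ℝ) (hl : 0 < l) :
    HasDerivAt (fun A => besselKernel q γ A l) (-besselKernel q (γ - 1) A l) A := by
  have hexponent : HasDerivAt (fun A : ℝ => -(A / l) - q * l) (-(1 / l)) A :=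
    (((hasDerivAt_id A).div_const l).neg).sub_const _
  refine (hexponent.exp.const_mul (l ^ γ)).congr_deriv ?_
  rw [besselKernel, Real.rpow_sub_one hl.ne']
  field_simp

lemma hasDerivAt_besselIntegral (hq : 0 < q) (hA : 0 < A) :
    HasDerivAt (besselIntegral q γ) (-besselIntegral q (γ - 1) A) A := by
  have h := hasDerivAt_integral_of_dominated_loc_of_deriv_le (μ := volume.restrict (Ioi 0))
    (F' := fun A l => -besselKernel q (γ - 1) A l) (Ioi_mem_nhds (half_lt_self hA))
    (.of_forall fun A' => aestronglyMeasurable_besselKernel γ q A')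
    (integrableOn_besselKernel γ hq hA) (aestronglyMeasurable_besselKernel (γ - 1) q A).neg
    ?_ (integrableOn_besselKernel (γ - 1) hq (half_pos hA)) ?_
  · rw [besselIntegral, ← integral_neg]
    exact h.2
  · refine (ae_restrict_iff' measurableSet_Ioi).2 (.of_forall fun l (hl : 0 < l) A' hA' => ?_)
    rw [norm_neg, Real.norm_of_nonneg (besselKernel_pos (γ - 1) q A' hl).le]
    have := (mem_Ioi.1 hA').le
    unfold besselKernel
    gcongr
  · exact (ae_restrict_iff' measurableSet_Ioi).2
      (.of_forall fun l hl A' _ => hasDerivAt_besselKernel_param γ q A' hl)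

lemma hasDerivAt_besselIntegral_sq (hw : 0 < w) (hq : 0 < q) (hx : 0 < x) :
    HasDerivAt (fun x => besselIntegral q γ (w * x ^ 2))
      (-(2 * w * x) * besselIntegral q (γ - 1) (w * x ^ 2)) x := by
  have hsq : HasDerivAt (fun x : ℝ => w * x ^ 2) (w * (2 * x)) x := by
    simpa using (hasDerivAt_pow 2 x).const_mul w
  refine ((hasDerivAt_besselIntegral γ hq (by positivity)).comp x hsq).congr_deriv ?_
  ring

lemma hasDerivAt_log_besselIntegral_sq (hw : 0 < w) (hq : 0 < q) (hx : 0 < x) :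
    HasDerivAt (fun x => Real.log (besselIntegral q γ (w * x ^ 2))) (besselLogDeriv w q γ x) x :=
  (hasDerivAt_besselIntegral_sq γ hw hq hx).log (besselIntegral_pos γ hq (by positivity)).ne'

-- A Riccati equation, equivalent to the second-order Bessel equation for `besselIntegral`.
lemma hasDerivAt_besselLogDeriv (hw : 0 < w) (hq : 0 < q) (hx : 0 < x) :
    HasDerivAt (besselLogDeriv w q γ)
      (4 * w * q + (1 + 2 * γ) * besselLogDeriv w q γ x / x - besselLogDeriv w q γ x ^ 2) x := by
  have hA : 0 < w * x ^ 2 := by positivity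
  have hpos := besselIntegral_pos γ hq hA
  have hlin : HasDerivAt (fun x : ℝ => -(2 * w * x)) (-(2 * w)) x := by
    simpa using ((hasDerivAt_id x).const_mul (2 * w)).fun_neg
  have hrec : besselIntegral q (γ - 1 - 1) (w * x ^ 2) = (q * besselIntegral q γ (w * x ^ 2) -
      γ * besselIntegral q (γ - 1) (w * x ^ 2)) / (w * x ^ 2) := by
    rw [eq_div_iff hA.ne', sub_sub, one_add_one_eq_two]
    linarith [besselIntegral_recurrence γ hq hA]
  refine ((hlin.mul (hasDerivAt_besselIntegral_sq (γ - 1) hw hq hx)).div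
    (hasDerivAt_besselIntegral_sq γ hw hq hx) hpos.ne').congr_deriv ?_
  simp only [Pi.mul_apply, hrec, besselLogDeriv]
  field_simp
  ring

end Bessel

/-! ### Alternation through zeros of the derivative -/

lemma exists_eq_zero_and_deriv_nonpos {f f' : ℝ → ℝ} {a b : ℝ} (hab : a < b)
    (hf : ∀ x ∈ Icc a b, HasDerivAt f (f' x) x) (ha : 0 < f a) (hb : f b < 0) :
    ∃ z ∈ Ioo a b, f z = 0 ∧ f' z ≤ 0 := by
  have hcont : ContinuousOn f (Icc a b) := HasDerivAt.continuousOn hf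
  have hcompact : IsCompact (Icc a b ∩ f ⁻¹' Iic 0) :=
    isCompact_Icc.of_isClosed_subset (hcont.preimage_isClosed_of_isClosed isClosed_Icc isClosed_Iic)
      inter_subset_left
  obtain ⟨z, ⟨hz, hfz⟩, hleast⟩ :=
    hcompact.exists_isLeast ⟨b, right_mem_Icc.2 hab.le, hb.le⟩
  have haz : a < z := hz.1.lt_of_ne (by rintro rfl; exact absurd ha (not_lt.2 hfz))
  have hpos : ∀ᶠ x in 𝓝[<] z, 0 < f x := by
    filter_upwards [Ioo_mem_nhdsLT haz] with x hx
    by_contra! h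
    exact absurd (hleast ⟨⟨hx.1.le, (hx.2.trans_le hz.2).le⟩, h⟩) (not_le.2 hx.2)
  have hfz₀ : f z = 0 := hfz.antisymm <| ge_of_tendsto
    ((hf z hz).continuousAt.tendsto.mono_left nhdsWithin_le_nhds) (hpos.mono fun _ => le_of_lt)
  refine ⟨z, ⟨haz, hz.2.lt_of_ne (by rintro rfl; exact hb.ne hfz₀)⟩, hfz₀, ?_⟩
  refine le_of_tendsto (hasDerivAt_iff_tendsto_slope_left_right.1 (hf z hz)).1 ?_
  filter_upwards [hpos, self_mem_nhdsWithin] with x hx hxz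
  rw [slope_def_field, hfz₀, sub_zero]
  exact div_nonpos_of_nonneg_of_nonpos hx.le (sub_nonpos.2 (mem_Iio.1 hxz).le)

lemma AlternatesOn.exists_zeros_deriv {f f' : ℝ → ℝ} {s : Set ℝ} [s.OrdConnected] {n : ℕ}
    (hf : ∀ x ∈ s, HasDerivAt f (f' x) x) (h : AlternatesOn f s (n + 1)) :
    ∃ z : ℕ → ℝ, (∀ i ≤ n, z i ∈ s) ∧ (∀ i < n, z i < z (i + 1)) ∧
      ∀ i ≤ n, f (z i) = 0 ∧ (-1) ^ i * f' (z i) ≤ 0 := by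
  obtain ⟨x, hxs, hx, hfx⟩ := h
  have hsub : ∀ i ≤ n, Icc (x i) (x (i + 1)) ⊆ s := fun i hi =>
    ‹s.OrdConnected›.out (hxs i (by lia)) (hxs (i + 1) (by lia))
  have zero : ∀ i, ∃ z, i ≤ n → z ∈ Ioo (x i) (x (i + 1)) ∧ f z = 0 ∧ (-1) ^ i * f' z ≤ 0 := by
    intro i
    by_cases hi : i ≤ n
    · obtain ⟨z, hz, hfz, hf'z⟩ := exists_eq_zero_and_deriv_nonpos (hx i (by lia))
        (fun y hy => (hf y (hsub i hi hy)).const_mul ((-1) ^ i)) (hfx i (by lia))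
        (by have := hfx (i + 1) (by lia); rw [pow_succ] at this; linarith)
      exact ⟨z, fun _ => ⟨hz, (mul_eq_zero.1 hfz).resolve_left (by simp), hf'z⟩⟩
    · exact ⟨0, fun h => absurd h hi⟩
  choose z hz using zero
  exact ⟨z, fun i hi => hsub i hi (Ioo_subset_Icc_self (hz i hi).1),
    fun i hi => (hz i hi.le).1.2.trans (hz (i + 1) hi).1.1, fun i hi => (hz i hi).2⟩

-- Three consecutive zeros of `f` would give `g` the signs `≥ 0, ≤ 0, ≥ 0`.
lemma not_alternatesOn_neg_of_strictConcaveOn {f f' g c : ℝ → ℝ} {s : Set ℝ} [s.OrdConnected]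
    (hf : ∀ x ∈ s, HasDerivAt f (f' x) x) (hg : StrictConcaveOn ℝ s g) (hc : ∀ x ∈ s, 0 < c x)
    (hfg : ∀ x ∈ s, f x = 0 → f' x = c x * g x) : ¬AlternatesOn (-f) s 3 := by
  intro h
  obtain ⟨z, hzs, hz, hfz⟩ := h.exists_zeros_deriv fun x hx => (hf x hx).neg
  have hsign : ∀ i ≤ 2, 0 ≤ (-1) ^ i * g (z i) := by
    intro i hi
    obtain ⟨hfzi, hslope⟩ := hfz i hi
    rw [hfg _ (hzs i hi) (neg_eq_zero.1 hfzi)] at hslope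
    refine nonneg_of_mul_nonneg_right ?_ (hc _ (hzs i hi))
    linarith
  have h₀ := hsign 0 (by norm_num)
  have h₁ := hsign 1 (by norm_num)
  have h₂ := hsign 2 le_rfl
  have hz₀₁ := hz 0 (by norm_num)
  have hz₁₂ := hz 1 (by norm_num)
  have := hg.lt_on_openSegment (hzs 0 (by norm_num)) (hzs 2 le_rfl) (hz₀₁.trans hz₁₂).ne
    (by rw [openSegment_eq_Ioo (hz₀₁.trans hz₁₂)]; exact ⟨hz₀₁, hz₁₂⟩)
  norm_num at h₀ h₁ h₂ this
  rcases this with h | h <;> linarith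

lemma hasDerivAt_tanh (x : ℝ) : HasDerivAt Real.tanh (1 - Real.tanh x ^ 2) x := by
  have hcosh := Real.cosh_pos x
  rw [funext Real.tanh_eq_sinh_div_cosh]
  refine ((Real.hasDerivAt_sinh x).div (Real.hasDerivAt_cosh x) hcosh.ne').congr_deriv ?_
  field_simp

lemma tanh_sq_lt_one (x : ℝ) : Real.tanh x ^ 2 < 1 :=
  (sq_lt_one_iff_abs_lt_one _).2 (abs_lt.2 ⟨Real.neg_one_lt_tanh x, Real.tanh_lt_one x⟩)

lemma tanh_nonneg {x : ℝ} (hx : 0 ≤ x) : 0 ≤ Real.tanh x := by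
  rw [Real.tanh_eq_sinh_div_cosh]
  exact div_nonneg (Real.sinh_nonneg_iff.2 hx) (Real.cosh_pos x).le

lemma one_sub_tanh_sq_le (x : ℝ) : 1 - Real.tanh x ^ 2 ≤ 4 * Real.exp (-x) ^ 2 := by
  have hcosh : Real.exp x ≤ 2 * Real.cosh x := by
    rw [Real.cosh_eq]
    linarith [Real.exp_pos (-x)]
  calc 1 - Real.tanh x ^ 2 = 1 / Real.cosh x ^ 2 := by
        rw [Real.tanh_eq_sinh_div_cosh, div_pow, Real.sinh_sq]
        field_simp [(Real.cosh_pos x).ne']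
        ring
    _ = 4 / (2 * Real.cosh x) ^ 2 := by ring
    _ ≤ 4 / Real.exp x ^ 2 := by gcongr
    _ = 4 * Real.exp (-x) ^ 2 := by rw [Real.exp_neg, inv_pow, div_eq_mul_inv]

lemma tendsto_pow_mul_one_sub_tanh_sq (n : ℕ) :
    Tendsto (fun x => x ^ n * (1 - Real.tanh x ^ 2)) atTop (𝓝 0) := by
  have hexp : Tendsto (fun x : ℝ => 4 * (x ^ n * Real.exp (-x))) atTop (𝓝 0) := by
    simpa using (Real.tendsto_pow_mul_exp_neg_atTop_nhds_zero n).const_mul 4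
  refine squeeze_zero' ?_ ?_ hexp <;> filter_upwards [eventually_ge_atTop 0] with x hx
  · have := sub_pos.2 (tanh_sq_lt_one x)
    positivity
  · have hle : Real.exp (-x) ^ 2 ≤ Real.exp (-x) :=
      pow_le_of_le_one (Real.exp_pos _).le (Real.exp_le_one_iff.2 (by linarith)) two_ne_zero
    calc x ^ n * (1 - Real.tanh x ^ 2) ≤ x ^ n * (4 * Real.exp (-x)) := by
          gcongr
          linarith [one_sub_tanh_sq_le x]
      _ = 4 * (x ^ n * Real.exp (-x)) := by ring

/-- At a zero `x` of `y x = k tanh (k x) + besselLogDeriv w q γ x + x / σ²`, the product `x * y' x`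
equals `k * criticalSlope a β s (k x)` with `a = 1 + (4 w q - 2 γ / σ²) / k²`, `β = γ + 1 / 2` and
`s = 1 / (σ k)²`: the Riccati equation of `besselLogDeriv` eliminates the Bessel integrals. -/
noncomputable def criticalSlope (a β s z : ℝ) : ℝ :=
  a * z - 2 * (z * Real.tanh z ^ 2) - 2 * β * Real.tanh z - 2 * s * (z ^ 2 * Real.tanh z)
    - s ^ 2 * z ^ 3

section CriticalSlope

variable {a β s z : ℝ}

lemma hasDerivAt_criticalSlope (a β s z : ℝ) : HasDerivAt (criticalSlope a β s)
    (a - 2 * Real.tanh z ^ 2 - (1 - Real.tanh z ^ 2) * (4 * z * Real.tanh z + 2 * β + 2 * s * z ^ 2)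
      - 4 * s * (z * Real.tanh z) - 3 * s ^ 2 * z ^ 2) z := by
  have ht := hasDerivAt_tanh z
  have hid := hasDerivAt_id z
  refine (((((hid.const_mul a).sub ((hid.mul (ht.pow 2)).const_mul 2)).sub
    (ht.const_mul (2 * β))).sub (((hasDerivAt_pow 2 z).mul ht).const_mul (2 * s))).sub
    ((hasDerivAt_pow 3 z).const_mul (s ^ 2))).congr_deriv ?_
  simp only [id, Pi.pow_apply]
  push_cast
  ring

lemma hasDerivAt_deriv_criticalSlope (a β s z : ℝ) : HasDerivAt (deriv (criticalSlope a β s))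
    ((1 - Real.tanh z ^ 2) * (8 * z * Real.tanh z ^ 2 + 4 * β * Real.tanh z
        + 4 * s * z ^ 2 * Real.tanh z - 8 * Real.tanh z - 4 * z * (1 - Real.tanh z ^ 2) - 8 * s * z)
      - 4 * s * Real.tanh z - 6 * s ^ 2 * z) z := by
  rw [show deriv (criticalSlope a β s) = _ from
    funext fun z => (hasDerivAt_criticalSlope a β s z).deriv]
  have ht := hasDerivAt_tanh z
  have hid := hasDerivAt_id z
  refine (((((ht.pow 2).const_mul 2).const_sub a).sub (((ht.pow 2).const_sub 1).mul
    ((((hid.const_mul 4).mul ht).add_const (2 * β)).add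
      ((hasDerivAt_pow 2 z).const_mul (2 * s))))).sub ((hid.mul ht).const_mul (4 * s))).sub
    ((hasDerivAt_pow 2 z).const_mul (3 * s ^ 2)) |>.congr_deriv ?_
  simp only [id, Pi.pow_apply, Pi.mul_apply, Pi.add_apply]
  push_cast
  ring

lemma strictConcaveOn_criticalSlope {c z₀ : ℝ} (a : ℝ) (hβ : 0 ≤ β) (hs : 0 < s) (hc : 0 < c)
    (hz₀ : 0 ≤ z₀) (hsz₀ : c ≤ s * z₀ ^ 2)
    (htanh : ∀ z > z₀, (8 * z ^ 3 / c + (4 * β / c + 4) * z ^ 2) * (1 - Real.tanh z ^ 2) <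
      4 * Real.tanh z) :
    StrictConcaveOn ℝ (Ioi z₀) (criticalSlope a β s) := by
  refine strictConcaveOn_of_deriv2_neg (convex_Ioi z₀)
    (fun z _ => (hasDerivAt_criticalSlope a β s z).continuousAt.continuousWithinAt) fun z hz => ?_
  rw [interior_Ioi, mem_Ioi] at hz
  rw [Function.iterate_succ, Function.iterate_one, Function.comp_apply,
    (hasDerivAt_deriv_criticalSlope a β s z).deriv]
  have hz_pos : 0 < z := hz₀.trans_lt hz
  have ht₀ := tanh_nonneg hz_pos.le
  have ht₁ := (Real.tanh_lt_one z).le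
  have hsq := sub_pos.2 (tanh_sq_lt_one z)
  have hcz : 1 ≤ s * z ^ 2 / c := by
    rw [one_le_div hc]
    exact hsz₀.trans (by gcongr)
  have hmain := mul_lt_mul_of_pos_left (htanh z hz) hs
  have hfactor : 8 * z * Real.tanh z ^ 2 + 4 * β * Real.tanh z + 4 * s * z ^ 2 * Real.tanh z ≤
      s * (8 * z ^ 3 / c + (4 * β / c + 4) * z ^ 2) := by
    calc _ ≤ 8 * z * 1 + 4 * β * 1 + 4 * s * z ^ 2 * 1 := by
          gcongr
          exact (tanh_sq_lt_one z).le
      _ ≤ (8 * z + 4 * β) * (s * z ^ 2 / c) + 4 * s * z ^ 2 := by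
          linarith [le_mul_of_one_le_right (show 0 ≤ 8 * z + 4 * β by positivity) hcz]
      _ = _ := by ring
  have hdrop : 0 ≤ (1 - Real.tanh z ^ 2) *
      (8 * Real.tanh z + 4 * z * (1 - Real.tanh z ^ 2) + 8 * s * z) + 6 * s ^ 2 * z := by positivity
  linarith [mul_le_mul_of_nonneg_left hfactor hsq.le]

lemma exists_forall_strictConcaveOn_criticalSlope (hβ : 0 ≤ β) {c : ℝ} (hc : 0 < c) :
    ∃ z₀, ∀ a s z, 0 < s → z₀ ≤ z → c ≤ s * z ^ 2 →
      StrictConcaveOn ℝ (Ioi z) (criticalSlope a β s) := by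
  have hpoly : Tendsto (fun z : ℝ => (8 * z ^ 3 / c + (4 * β / c + 4) * z ^ 2) *
      (1 - Real.tanh z ^ 2)) atTop (𝓝 0) := by
    have h := ((tendsto_pow_mul_one_sub_tanh_sq 3).const_mul (8 / c)).add
      ((tendsto_pow_mul_one_sub_tanh_sq 2).const_mul (4 * β / c + 4))
    rw [mul_zero, mul_zero, add_zero] at h
    exact h.congr fun z => by ring
  have hone := tendsto_pow_mul_one_sub_tanh_sq 0
  obtain ⟨z₁, hz₁⟩ := ((hpoly.eventually_lt_const two_pos).and (hone.eventually_lt_const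
    (show (0 : ℝ) < 3 / 4 by norm_num))).exists_forall_of_atTop
  refine ⟨max z₁ 1, fun a s z hs hz hsz => ?_⟩
  have hz_pos : 0 < z := zero_lt_one.trans_le ((le_max_right _ _).trans hz)
  refine strictConcaveOn_criticalSlope a hβ hs hc hz_pos.le hsz fun y hy => ?_
  obtain ⟨hpoly_lt, htanh⟩ := hz₁ y ((le_max_left _ _).trans (hz.trans hy.le))
  have := tanh_nonneg (hz_pos.trans hy).le
  rw [pow_zero, one_mul] at htanh
  nlinarith

end CriticalSlope

/-! ### The symmetrised variance-gamma profile -/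

/-- The even profile whose tilt is the variance-gamma mixture density; `k` is the drift parameter of
the two mixed components, and the remaining parameters are those of `besselIntegral`. -/
noncomputable def vgProfile (k w q γ x : ℝ) : ℝ :=
  Real.cosh (k * x) * besselIntegral q γ (w * x ^ 2)

section VGProfile

variable {k w q γ σ δ M : ℝ}

lemma vgProfile_neg (k w q γ x : ℝ) : vgProfile k w q γ (-x) = vgProfile k w q γ x := by
  simp only [vgProfile, mul_neg, Real.cosh_neg, even_two, Even.neg_pow]

lemma vgProfile_abs (k w q γ x : ℝ) : vgProfile k w q γ |x| = vgProfile k w q γ x := by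
  rw [vgProfile, vgProfile, sq_abs, ← Real.cosh_abs, ← Real.cosh_abs (k * x), abs_mul, abs_mul,
    abs_abs]

lemma vgProfile_nonneg (k w q γ x : ℝ) : 0 ≤ vgProfile k w q γ x :=
  mul_nonneg (Real.cosh_pos _).le (besselIntegral_nonneg _ _ _)

lemma vgProfile_pos (k γ : ℝ) (hw : 0 < w) (hq : 0 < q) {x : ℝ} (hx : 0 < x) :
    0 < vgProfile k w q γ x :=
  mul_pos (Real.cosh_pos _) (besselIntegral_pos γ hq (by positivity))

lemma hasDerivAt_log_vgProfile (k γ : ℝ) (hw : 0 < w) (hq : 0 < q) {x : ℝ} (hx : 0 < x) :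
    HasDerivAt (fun x => Real.log (vgProfile k w q γ x))
      (k * Real.tanh (k * x) + besselLogDeriv w q γ x) x := by
  have hcosh : HasDerivAt (fun x => Real.log (Real.cosh (k * x))) (k * Real.tanh (k * x)) x := by
    refine (((hasDerivAt_id x).const_mul k).cosh.log (Real.cosh_pos _).ne').congr_deriv ?_
    rw [Real.tanh_eq_sinh_div_cosh]
    simp only [id]
    ring
  refine (hcosh.add (hasDerivAt_log_besselIntegral_sq γ hw hq hx)).congr_of_eventuallyEq ?_
  filter_upwards [Ioi_mem_nhds hx] with y hy
  exact Real.log_mul (Real.cosh_pos _).ne'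
    (besselIntegral_pos γ hq (mul_pos hw (pow_pos (mem_Ioi.1 hy) 2))).ne'

lemma hasDerivAt_logDeriv_vgProfile_add (k γ σ : ℝ) (hw : 0 < w) (hq : 0 < q) {x : ℝ}
    (hx : 0 < x) :
    HasDerivAt (fun x => k * Real.tanh (k * x) + besselLogDeriv w q γ x + x / σ ^ 2)
      (k ^ 2 * (1 - Real.tanh (k * x) ^ 2) + (4 * w * q +
        (1 + 2 * γ) * besselLogDeriv w q γ x / x - besselLogDeriv w q γ x ^ 2) + 1 / σ ^ 2) x := by
  have hkx : HasDerivAt (fun x : ℝ => k * x) k x := by simpa using (hasDerivAt_id x).const_mul k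
  refine ((((hasDerivAt_tanh (k * x)).comp x hkx).const_mul k).add
    (hasDerivAt_besselLogDeriv γ hw hq hx)).add ((hasDerivAt_id x).div_const (σ ^ 2))
    |>.congr_deriv ?_
  ring

lemma riccati_eq_criticalSlope {x L : ℝ} (hk : k ≠ 0) (hx : x ≠ 0) (hσ : σ ≠ 0)
    (h : k * Real.tanh (k * x) + L + x / σ ^ 2 = 0) :
    k ^ 2 * (1 - Real.tanh (k * x) ^ 2) + (4 * w * q + (1 + 2 * γ) * L / x - L ^ 2) + 1 / σ ^ 2 =
      k / x * criticalSlope (1 + (4 * w * q - 2 * γ / σ ^ 2) / k ^ 2) (γ + 1 / 2) (1 / (σ * k) ^ 2)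
        (k * x) := by
  obtain rfl : L = -(k * Real.tanh (k * x)) - x / σ ^ 2 := by linarith
  rw [criticalSlope]
  field_simp
  ring

theorem exists_not_alternatesOn_tilt_vgProfile (hγ : -1 / 2 ≤ γ) (hδ : 0 < δ) (hM : 0 < M) :
    ∃ z₀, ∀ k w q N σ, 0 < w → 0 < q → 0 < N → 0 < k → z₀ ≤ k * δ → σ ∈ Ioc 0 M →
      ¬AlternatesOn (tilt N (vgProfile k w q γ) - bsDensity σ) (Ioi δ) 4 := by
  obtain ⟨z₀, hconcave⟩ := exists_forall_strictConcaveOn_criticalSlope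
    (β := γ + 1 / 2) (by linarith) (show 0 < δ ^ 2 / M ^ 2 by positivity)
  refine ⟨z₀, fun k w q N σ hw hq hN hk hkδ ⟨hσ, hσM⟩ h => ?_⟩
  have hpos : ∀ x ∈ Ioi δ, 0 < x := fun x hx => hδ.trans hx
  have hs : δ ^ 2 / M ^ 2 ≤ 1 / (σ * k) ^ 2 * (k * δ) ^ 2 := by
    calc δ ^ 2 / M ^ 2 ≤ δ ^ 2 / σ ^ 2 := by gcongr
      _ = 1 / (σ * k) ^ 2 * (k * δ) ^ 2 := by field_simp
  have hg := hconcave (1 + (4 * w * q - 2 * γ / σ ^ 2) / k ^ 2) (1 / (σ * k) ^ 2) (k * δ)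
    (by positivity) hkδ hs
  have hscale : StrictConcaveOn ℝ (Ioi δ) fun x =>
      criticalSlope (1 + (4 * w * q - 2 * γ / σ ^ 2) / k ^ 2) (γ + 1 / 2) (1 / (σ * k) ^ 2)
        (k * x) := by
    refine ⟨convex_Ioi δ, fun x hx y hy hxy a b ha hb hab => ?_⟩
    have := hg.2 (mem_Ioi.2 (mul_lt_mul_of_pos_left hx hk)) (mul_lt_mul_of_pos_left hy hk)
      (by simpa [hk.ne'] using hxy) ha hb hab
    simp only [smul_eq_mul] at this ⊢
    rwa [show k * (a * x + b * y) = a * (k * x) + b * (k * y) by ring]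
  refine not_alternatesOn_neg_of_strictConcaveOn
    (fun x hx => hasDerivAt_logDeriv_vgProfile_add k γ σ hw hq (hpos x hx)) hscale
    (fun x hx => div_pos hk (hpos x hx))
    (fun x hx => riccati_eq_criticalSlope hk.ne' (hpos x hx).ne' hσ.ne') ?_
  exact h.neg_deriv_log_tilt hN hσ isOpen_Ioi (fun x hx => vgProfile_pos k γ hw hq (hpos x hx))
    fun x hx => hasDerivAt_log_vgProfile k γ hw hq (hpos x hx)

lemma continuousOn_besselIntegral (hq : 0 < q) (hγ : -1 < γ) :
    ContinuousOn (besselIntegral q γ) (Ici 0) := by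
  refine continuousOn_of_dominated (bound := besselKernel q γ 0)
    (fun A _ => aestronglyMeasurable_besselKernel γ q A) (fun A (hA : 0 ≤ A) => ?_)
    (integrableOn_besselKernel_of_neg_one_lt hq hγ le_rfl) ?_
  · refine (ae_restrict_iff' measurableSet_Ioi).2 (.of_forall fun l (hl : 0 < l) => ?_)
    rw [Real.norm_of_nonneg (besselKernel_pos γ q A hl).le]
    unfold besselKernel
    gcongr
  · refine .of_forall fun l => Continuous.continuousOn ?_
    unfold besselKernel
    fun_prop

lemma continuous_vgProfile (k : ℝ) (hw : 0 < w) (hq : 0 < q) (hγ : -1 < γ) :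
    Continuous (vgProfile k w q γ) :=
  (Real.continuous_cosh.comp (continuous_const.mul continuous_id)).mul <|
    (continuousOn_besselIntegral hq hγ).comp_continuous (by fun_prop) fun x => by
      rw [mem_Ici]; positivity

end VGProfile

section VGProfileIntegral

variable {k w q γ θ l x : ℝ}

lemma exp_linear_sub_sq_eq {b : ℝ} (hb : b ≠ 0) (θ x : ℝ) : Real.exp (θ * x - b * x ^ 2) =
    Real.exp (θ ^ 2 / (4 * b)) * Real.exp (-b * (x - θ / (2 * b)) ^ 2) := by
  rw [← Real.exp_add]
  congr 1
  field_simp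
  ring

lemma integrable_exp_linear_sub_sq {b : ℝ} (hb : 0 < b) (θ : ℝ) :
    Integrable fun x : ℝ => Real.exp (θ * x - b * x ^ 2) := by
  simp only [exp_linear_sub_sq_eq hb.ne']
  exact ((integrable_exp_neg_mul_sq hb).comp_sub_right _).const_mul _

lemma integral_exp_linear_sub_sq {b : ℝ} (hb : 0 < b) (θ : ℝ) :
    ∫ x : ℝ, Real.exp (θ * x - b * x ^ 2) = √(Real.pi / b) * Real.exp (θ ^ 2 / (4 * b)) := by
  simp only [exp_linear_sub_sq_eq hb.ne']
  rw [integral_const_mul, integral_sub_right_eq_self (fun x => Real.exp (-b * x ^ 2)),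
    integral_gaussian, mul_comm]

lemma exp_mul_besselKernel_sq (w q γ θ x l : ℝ) :
    Real.exp (θ * x) * besselKernel q γ (w * x ^ 2) l =
      l ^ γ * Real.exp (-(q * l)) * Real.exp (θ * x - w / l * x ^ 2) := by
  rw [besselKernel, mul_left_comm, ← Real.exp_add, mul_assoc, ← Real.exp_add]
  ring_nf

lemma integrable_exp_mul_besselKernel_sq (q γ θ : ℝ) (hw : 0 < w) (hl : 0 < l) :
    Integrable fun x => Real.exp (θ * x) * besselKernel q γ (w * x ^ 2) l := by
  simp only [exp_mul_besselKernel_sq]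
  exact (integrable_exp_linear_sub_sq (div_pos hw hl) θ).const_mul _

lemma integral_exp_mul_besselKernel_sq (q γ θ : ℝ) (hw : 0 < w) (hl : 0 < l) :
    ∫ x, Real.exp (θ * x) * besselKernel q γ (w * x ^ 2) l =
      √(Real.pi / w) * (l ^ (γ + 3 / 2 - 1) * Real.exp (-((q - θ ^ 2 / (4 * w)) * l))) := by
  simp only [exp_mul_besselKernel_sq]
  rw [integral_const_mul, integral_exp_linear_sub_sq (div_pos hw hl),
    show Real.pi / (w / l) = Real.pi / w * l by field_simp, Real.sqrt_mul (by positivity),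
    Real.sqrt_eq_rpow l, show γ + 3 / 2 - 1 = γ + 1 / 2 by ring, Real.rpow_add hl,
    show -((q - θ ^ 2 / (4 * w)) * l) = -(q * l) + θ ^ 2 / (4 * (w / l)) by field_simp; ring,
    Real.exp_add]
  ring

lemma integrable_prod_exp_mul_besselKernel_sq (hw : 0 < w) (hγ : -3 / 2 < γ)
    (hθ : 0 < q - θ ^ 2 / (4 * w)) :
    Integrable (Function.uncurry fun x l => Real.exp (θ * x) * besselKernel q γ (w * x ^ 2) l)
      (volume.prod (volume.restrict (Ioi 0))) := by
  have hmeas : Measurable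
      (Function.uncurry fun x l => Real.exp (θ * x) * besselKernel q γ (w * x ^ 2) l) := by
    unfold besselKernel
    fun_prop
  refine (integrable_prod_iff' hmeas.aestronglyMeasurable).2 ⟨?_, ?_⟩
  · exact (ae_restrict_iff' measurableSet_Ioi).2
      (.of_forall fun l hl => integrable_exp_mul_besselKernel_sq q γ θ hw hl)
  · refine ((integrableOn_rpow_mul_exp_neg_mul (s := γ + 3 / 2 - 1) (by linarith) hθ).const_mul
      √(Real.pi / w)).congr ((ae_restrict_iff' measurableSet_Ioi).2 (.of_forall fun l hl => ?_))
    beta_reduce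
    rw [← integral_exp_mul_besselKernel_sq q γ θ hw hl]
    exact integral_congr_ae <| .of_forall fun x => (Real.norm_of_nonneg <|
      mul_nonneg (Real.exp_pos _).le (besselKernel_pos γ q _ hl).le).symm

lemma integrable_exp_mul_besselIntegral_sq (hw : 0 < w) (hγ : -3 / 2 < γ)
    (hθ : 0 < q - θ ^ 2 / (4 * w)) :
    Integrable fun x => Real.exp (θ * x) * besselIntegral q γ (w * x ^ 2) := by
  simp only [besselIntegral, ← integral_const_mul]
  exact (integrable_prod_exp_mul_besselKernel_sq hw hγ hθ).integral_prod_left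

lemma integral_exp_mul_besselIntegral_sq (hw : 0 < w) (hγ : -3 / 2 < γ)
    (hθ : 0 < q - θ ^ 2 / (4 * w)) :
    ∫ x, Real.exp (θ * x) * besselIntegral q γ (w * x ^ 2) =
      √(Real.pi / w) * ((1 / (q - θ ^ 2 / (4 * w))) ^ (γ + 3 / 2) * Real.Gamma (γ + 3 / 2)) := by
  simp only [besselIntegral, ← integral_const_mul]
  rw [integral_integral_swap (integrable_prod_exp_mul_besselKernel_sq hw hγ hθ),
    setIntegral_congr_fun measurableSet_Ioi fun l hl =>
      integral_exp_mul_besselKernel_sq q γ θ hw hl,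
    integral_const_mul, Real.integral_rpow_mul_exp_neg_mul_Ioi (by linarith) hθ]

lemma exp_mul_vgProfile (k w q γ θ x : ℝ) : Real.exp (θ * x) * vgProfile k w q γ x = 1 / 2 *
    (Real.exp ((θ + k) * x) * besselIntegral q γ (w * x ^ 2) +
      Real.exp ((θ - k) * x) * besselIntegral q γ (w * x ^ 2)) := by
  rw [vgProfile, Real.cosh_eq, add_mul θ, sub_mul, sub_eq_add_neg, Real.exp_add, Real.exp_add]
  ring

lemma integrable_exp_mul_vgProfile (hw : 0 < w) (hγ : -3 / 2 < γ)
    (hadd : 0 < q - (θ + k) ^ 2 / (4 * w)) (hsub : 0 < q - (θ - k) ^ 2 / (4 * w)) :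
    Integrable fun x => Real.exp (θ * x) * vgProfile k w q γ x := by
  simp only [exp_mul_vgProfile]
  exact ((integrable_exp_mul_besselIntegral_sq hw hγ hadd).add
    (integrable_exp_mul_besselIntegral_sq hw hγ hsub)).const_mul _

lemma integral_exp_mul_vgProfile (hw : 0 < w) (hγ : -3 / 2 < γ)
    (hadd : 0 < q - (θ + k) ^ 2 / (4 * w)) (hsub : 0 < q - (θ - k) ^ 2 / (4 * w)) :
    ∫ x, Real.exp (θ * x) * vgProfile k w q γ x =
      √(Real.pi / w) * Real.Gamma (γ + 3 / 2) / 2 * ((1 / (q - (θ + k) ^ 2 / (4 * w))) ^ (γ + 3 / 2)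
        + (1 / (q - (θ - k) ^ 2 / (4 * w))) ^ (γ + 3 / 2)) := by
  simp only [exp_mul_vgProfile]
  rw [integral_const_mul, integral_add (integrable_exp_mul_besselIntegral_sq hw hγ hadd)
      (integrable_exp_mul_besselIntegral_sq hw hγ hsub),
    integral_exp_mul_besselIntegral_sq hw hγ hadd, integral_exp_mul_besselIntegral_sq hw hγ hsub]
  ring

lemma le_besselKernel_sq (hw : 0 ≤ w) (hq : 0 ≤ q) (hγ : -1 ≤ γ) (hx : 1 ≤ x)
    (hl : l ∈ Ioc x (2 * x)) :
    1 / (2 * x) * Real.exp (-(w + 2 * q) * x) ≤ besselKernel q γ (w * x ^ 2) l := by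
  have hl₁ : 1 ≤ l := hx.trans hl.1.le
  have hpow : 1 / (2 * x) ≤ l ^ γ := by
    calc 1 / (2 * x) ≤ 1 / l := by gcongr; exact hl.2
      _ = l ^ (-1 : ℝ) := by rw [Real.rpow_neg_one, one_div]
      _ ≤ l ^ γ := Real.rpow_le_rpow_of_exponent_le hl₁ hγ
  have hdiv : w * x ^ 2 / l ≤ w * x := by
    rw [div_le_iff₀ (by linarith), sq, ← mul_assoc]
    exact mul_le_mul_of_nonneg_left hl.1.le (by positivity)
  have hmul : q * l ≤ q * (2 * x) := mul_le_mul_of_nonneg_left hl.2 hq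
  unfold besselKernel
  gcongr
  linarith

lemma exp_neg_le_vgProfile (k : ℝ) (hw : 0 < w) (hq : 0 < q) (hγ : -1 ≤ γ) (hx : 1 ≤ x) :
    1 / 2 * Real.exp (-(w + 2 * q) * x) ≤ vgProfile k w q γ x := by
  have hint := integrableOn_besselKernel γ hq (show 0 < w * x ^ 2 by positivity)
  have hsub : Ioc x (2 * x) ⊆ Ioi 0 := fun l hl => (by linarith : 0 < x).trans hl.1
  calc 1 / 2 * Real.exp (-(w + 2 * q) * x)
      = ∫ _ in Ioc x (2 * x), 1 / (2 * x) * Real.exp (-(w + 2 * q) * x) := by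
        rw [setIntegral_const, Real.volume_real_Ioc_of_le (by linarith), smul_eq_mul]
        field_simp
        ring
    _ ≤ ∫ l in Ioc x (2 * x), besselKernel q γ (w * x ^ 2) l :=
        setIntegral_mono_on (integrableOn_const (by simp)) (hint.mono_set hsub) measurableSet_Ioc
          fun l hl => le_besselKernel_sq hw.le hq.le hγ hx hl
    _ ≤ besselIntegral q γ (w * x ^ 2) := setIntegral_mono_set hint
        ((ae_restrict_iff' measurableSet_Ioi).2
          (.of_forall fun l hl => (besselKernel_pos γ q _ hl).le)) hsub.eventuallyLE
    _ ≤ vgProfile k w q γ x :=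
        le_mul_of_one_le_left (besselIntegral_nonneg _ _ _) (Real.one_le_cosh _)

end VGProfileIntegral

section SmallNearZero

variable {m w r γ β L x l : ℝ}

lemma integrableOn_deriv_mul_comp {φ φ' g : ℝ → ℝ} {s : Set ℝ} (hs : MeasurableSet s)
    (hφ : ∀ x ∈ s, HasDerivWithinAt φ (φ' x) s x) (hinj : InjOn φ s) (hφ' : ∀ x ∈ s, 0 ≤ φ' x)
    (hg : Integrable g) : IntegrableOn (fun x => φ' x * g (φ x)) s := by
  refine ((integrableOn_image_iff_integrableOn_abs_deriv_smul hs hφ hinj g).1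
    hg.integrableOn).congr_fun (fun x hx => ?_) hs
  simp only [smul_eq_mul, abs_of_nonneg (hφ' x hx)]

lemma setIntegral_deriv_mul_comp_le {φ φ' g : ℝ → ℝ} {s : Set ℝ} (hs : MeasurableSet s)
    (hφ : ∀ x ∈ s, HasDerivWithinAt φ (φ' x) s x) (hinj : InjOn φ s) (hφ' : ∀ x ∈ s, 0 ≤ φ' x)
    (hg : Integrable g) (hg₀ : 0 ≤ g) : ∫ x in s, φ' x * g (φ x) ≤ ∫ y, g y :=
  calc ∫ x in s, φ' x * g (φ x) = ∫ x in s, |φ' x| • g (φ x) :=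
        setIntegral_congr_fun hs fun x hx => by
          simp only [smul_eq_mul, abs_of_nonneg (hφ' x hx)]
    _ = ∫ y in φ '' s, g y := (integral_image_eq_integral_abs_deriv_smul hs hφ hinj g).symm
    _ ≤ ∫ y, g y := setIntegral_le_integral hg (.of_forall hg₀)

/-- The deviation of `x` from the drift `m l`, measured in standard deviations `√l` and signed so
that it increases with `l`; the variable in which the conditional Gaussian density is integrated. -/
noncomputable def scaledDeviation (m x l : ℝ) : ℝ := (m * l - x) / √l

lemma scaledDeviation_sq (m x : ℝ) (hl : 0 < l) :
    scaledDeviation m x l ^ 2 = (m * l - x) ^ 2 / l := by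
  rw [scaledDeviation, div_pow, Real.sq_sqrt hl.le]

lemma hasDerivAt_scaledDeviation (m x : ℝ) (hl : 0 < l) :
    HasDerivAt (scaledDeviation m x) ((m + x / l) / (2 * √l)) l := by
  have hlin : HasDerivAt (fun l : ℝ => m * l - x) m l := by
    simpa using ((hasDerivAt_id l).const_mul m).sub_const x
  refine (hlin.div (Real.hasDerivAt_sqrt hl.ne') (Real.sqrt_pos.2 hl).ne').congr_deriv ?_
  rw [Real.sq_sqrt hl.le]
  field_simp
  rw [Real.sq_sqrt hl.le]
  ring

lemma strictMonoOn_scaledDeviation (hm : 0 < m) (hx : 0 ≤ x) :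
    StrictMonoOn (scaledDeviation m x) (Ioi 0) := by
  refine strictMonoOn_of_deriv_pos (convex_Ioi 0)
    (fun l hl => (hasDerivAt_scaledDeviation m x hl).continuousAt.continuousWithinAt) fun l hl => ?_
  rw [interior_Ioi, mem_Ioi] at hl
  rw [(hasDerivAt_scaledDeviation m x hl).deriv]
  positivity

lemma cosh_le_exp_of_nonneg {y : ℝ} (hy : 0 ≤ y) : Real.cosh y ≤ Real.exp y := by
  rw [Real.cosh_eq]
  linarith [Real.exp_le_exp.2 (neg_le_self hy)]

-- Completing the square: `k x - w x² / l - (w m² + r) l = -w (m l - x)² / l - r l` for `k = 2 w m`.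
lemma cosh_mul_besselKernel_le (γ r : ℝ) (hw : 0 < w) (hm : 0 < m) (hx : 0 ≤ x) (hl : 0 < l) :
    Real.cosh (2 * w * m * x) * besselKernel (w * m ^ 2 + r) γ (w * x ^ 2) l ≤
      l ^ γ * (Real.exp (-w * scaledDeviation m x l ^ 2) * Real.exp (-(r * l))) := by
  calc _ ≤ Real.exp (2 * w * m * x) * besselKernel (w * m ^ 2 + r) γ (w * x ^ 2) l :=
        mul_le_mul_of_nonneg_right (cosh_le_exp_of_nonneg (by positivity))
          (besselKernel_pos _ _ _ hl).le
    _ = _ := by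
        rw [besselKernel, scaledDeviation_sq m x hl, mul_left_comm, ← Real.exp_add, ← Real.exp_add]
        congr 2
        field_simp
        ring

lemma rpow_mul_exp_le_of_le (hm : 0 < m) (hx : 0 ≤ x) (hr : 0 ≤ r) (hβ : 0 ≤ β) (hl : 0 < l)
    (hlL : l ≤ L) :
    l ^ (β - 1 / 2) * (Real.exp (-w * scaledDeviation m x l ^ 2) * Real.exp (-(r * l))) ≤
      2 / m * L ^ β *
        ((m + x / l) / (2 * √l) * Real.exp (-w * scaledDeviation m x l ^ 2)) := by
  have := Real.sqrt_pos.2 hl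
  have hL : 0 < L := hl.trans_le hlL
  have hexp : Real.exp (-(r * l)) ≤ 1 := Real.exp_le_one_iff.2 (neg_nonpos.2 (by positivity))
  have hpow : l ^ (β - 1 / 2) ≤ 2 / m * L ^ β * ((m + x / l) / (2 * √l)) := by
    calc l ^ (β - 1 / 2) = 2 / m * l ^ β * ((m + 0) / (2 * √l)) := by
          rw [Real.rpow_sub hl, ← Real.sqrt_eq_rpow]
          field_simp
          ring
      _ ≤ _ := by
          gcongr
          positivity
  calc _ ≤ 2 / m * L ^ β * ((m + x / l) / (2 * √l)) *
        (Real.exp (-w * scaledDeviation m x l ^ 2) * 1) := by gcongr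
    _ = _ := by ring

lemma rpow_mul_exp_le_of_ge (γ r : ℝ) (hw : 0 < w) (hm : 0 < m) (hxL : x ≤ m * L / 2) (hL : 0 < L)
    (hlL : L ≤ l) :
    l ^ γ * (Real.exp (-w * scaledDeviation m x l ^ 2) * Real.exp (-(r * l))) ≤
      Real.exp (-(w * m ^ 2 * L / 4)) * (l ^ γ * Real.exp (-(r * l))) := by
  have hl : 0 < l := hL.trans_le hlL
  have hdev : m ^ 2 * L / 4 ≤ scaledDeviation m x l ^ 2 := by
    have hhalf : m * l / 2 ≤ m * l - x := by
      have := mul_le_mul_of_nonneg_left hlL hm.le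
      linarith
    calc m ^ 2 * L / 4 ≤ m ^ 2 * l / 4 := by gcongr
      _ = (m * l / 2) ^ 2 / l := by field_simp; ring
      _ ≤ scaledDeviation m x l ^ 2 := by
        rw [scaledDeviation_sq m x hl]
        gcongr
  have hexp : Real.exp (-w * scaledDeviation m x l ^ 2) ≤ Real.exp (-(w * m ^ 2 * L / 4)) :=
    Real.exp_le_exp.2 (by linarith [mul_le_mul_of_nonneg_left hdev hw.le])
  calc _ = Real.exp (-w * scaledDeviation m x l ^ 2) * (l ^ γ * Real.exp (-(r * l))) := by ring
    _ ≤ _ := by gcongr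

theorem vgProfile_le (hw : 0 < w) (hm : 0 < m) (hr : 0 < r) (hβ : 0 ≤ β) (hL : 0 < L)
    (hx : 0 ≤ x) (hxL : x ≤ m * L / 2) :
    vgProfile (2 * w * m) w (w * m ^ 2 + r) (β - 1 / 2) x ≤
      2 / m * L ^ β * √(Real.pi / w) + Real.exp (-(w * m ^ 2 * L / 4)) *
        ∫ l in Ioi 0, l ^ (β - 1 / 2) * Real.exp (-(r * l)) := by
  have hφ : ∀ l ∈ Ioi (0 : ℝ),
      HasDerivWithinAt (scaledDeviation m x) ((m + x / l) / (2 * √l)) (Ioi 0) l :=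
    fun l hl => (hasDerivAt_scaledDeviation m x hl).hasDerivWithinAt
  have hφ' : ∀ l ∈ Ioi (0 : ℝ), 0 ≤ (m + x / l) / (2 * √l) := fun l (hl : 0 < l) => by positivity
  have hinj := (strictMonoOn_scaledDeviation hm hx).injOn
  have hgauss := integrable_exp_neg_mul_sq hw
  have hnear := (integrableOn_deriv_mul_comp measurableSet_Ioi hφ hinj hφ' hgauss).const_mul
    (2 / m * L ^ β)
  have hfar := (integrableOn_rpow_mul_exp_neg_mul (s := β - 1 / 2) (by linarith) hr).const_mul
    (Real.exp (-(w * m ^ 2 * L / 4)))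
  have hkernel := (integrableOn_besselKernel_of_neg_one_lt (q := w * m ^ 2 + r) (γ := β - 1 / 2)
    (A := w * x ^ 2) (by positivity) (by linarith) (by positivity)).const_mul
    (Real.cosh (2 * w * m * x))
  rw [vgProfile, besselIntegral, ← integral_const_mul]
  refine (setIntegral_mono_on hkernel (hnear.add hfar) measurableSet_Ioi
    fun l (hl : 0 < l) => ?_).trans ?_
  · refine (cosh_mul_besselKernel_le _ r hw hm hx hl).trans ?_
    rcases le_total l L with hlL | hlL
    · refine (rpow_mul_exp_le_of_le hm hx hr.le hβ hl hlL).trans (le_add_of_nonneg_right ?_)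
      positivity
    · refine (rpow_mul_exp_le_of_ge _ r hw hm hxL hL hlL).trans (le_add_of_nonneg_left ?_)
      positivity
  · rw [integral_add' hnear hfar, integral_const_mul, integral_const_mul, ← integral_gaussian]
    gcongr
    exact setIntegral_deriv_mul_comp_le measurableSet_Ioi hφ hinj hφ' hgauss
      fun _ => (Real.exp_pos _).le

lemma integral_rpow_mul_exp_neg_mul_anti {s : ℝ} (hγ : -1 < γ) (hr : 0 < r) (hrs : r ≤ s) :
    ∫ l in Ioi 0, l ^ γ * Real.exp (-(s * l)) ≤ ∫ l in Ioi 0, l ^ γ * Real.exp (-(r * l)) := by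
  refine setIntegral_mono_on (integrableOn_rpow_mul_exp_neg_mul hγ (hr.trans_le hrs))
    (integrableOn_rpow_mul_exp_neg_mul hγ hr) measurableSet_Ioi fun l (hl : 0 < l) => ?_
  gcongr

theorem exists_eventually_forall_sqrt_mul_vgProfile_lt {ε : ℝ} (hm : 0 < m) (hr : 0 < r)
    (hβ : 0 < β) (hε : 0 < ε) :
    ∃ δ > 0, ∀ᶠ w in atTop, ∀ s ≥ r, ∀ x, |x| ≤ δ →
      √w * vgProfile (2 * w * m) w (w * m ^ 2 + s) (β - 1 / 2) x < ε := by
  have hpow : Tendsto (fun L : ℝ => 2 / m * L ^ β * √Real.pi) (𝓝[>] 0) (𝓝 0) := by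
    refine (Continuous.tendsto' ?_ 0 0 ?_).mono_left nhdsWithin_le_nhds
    · exact (continuous_const.mul (Real.continuous_rpow_const hβ.le)).mul_const _
    · rw [Real.zero_rpow hβ.ne', mul_zero, zero_mul]
  obtain ⟨L, hLε, hL⟩ := ((hpow.eventually_lt_const hε).and self_mem_nhdsWithin).exists
  set G := ∫ l in Ioi 0, l ^ (β - 1 / 2) * Real.exp (-(r * l))
  have hlim : Tendsto (fun w => 2 / m * L ^ β * √Real.pi +
      w ^ (1 / 2 : ℝ) * Real.exp (-(m ^ 2 * L / 4) * w) * G) atTop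
      (𝓝 (2 / m * L ^ β * √Real.pi + 0 * G)) :=
    tendsto_const_nhds.add ((tendsto_rpow_mul_exp_neg_mul_atTop_nhds_zero _ _
      (by positivity)).mul_const G)
  refine ⟨m * L / 2, by positivity, ?_⟩
  filter_upwards [hlim.eventually_lt_const (by simpa using hLε), eventually_gt_atTop 0]
    with w hw hw₀ s hs x hx
  have hG : ∫ l in Ioi 0, l ^ (β - 1 / 2) * Real.exp (-(s * l)) ≤ G :=
    integral_rpow_mul_exp_neg_mul_anti (by linarith) hr hs
  rw [← vgProfile_abs]
  calc _ ≤ √w * (2 / m * L ^ β * √(Real.pi / w) + Real.exp (-(w * m ^ 2 * L / 4)) * G) := by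
        gcongr
        refine (vgProfile_le hw₀ hm (hr.trans_le hs) hβ.le hL (abs_nonneg x) hx).trans ?_
        gcongr
    _ = _ := by
        rw [Real.sqrt_div Real.pi_pos.le, ← Real.sqrt_eq_rpow,
          show w * m ^ 2 * L / 4 = m ^ 2 * L / 4 * w by ring, ← neg_mul]
        have := Real.sqrt_pos.2 hw₀
        field_simp
    _ < ε := hw

end SmallNearZero

/-! ### The variance-gamma mixture model -/

/-- The weight common to the two components: both `a (λ - μ/2)^{cT} / ((a + b) Γ(cT))` and
`b (λ + μ/2)^{cT} / ((a + b) Γ(cT))` equal it, which is why the mixture is put–call symmetric. -/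
noncomputable def commonWeight (c lam mu T : ℝ) : ℝ :=
  lam ^ (c * T) * (mixA c lam mu T * mixB c lam mu T) /
    ((mixA c lam mu T + mixB c lam mu T) * Real.Gamma (c * T))

/-- The rate `1 / (2 v²)` of the Gaussian exponents. -/
noncomputable def gaussianRate (v : ℝ) : ℝ := 1 / (2 * v ^ 2)

/-- The even profile of the mixture density with `v > 0`. -/
noncomputable def mixProfile (c lam mu T v : ℝ) : ℝ → ℝ :=
  vgProfile (2 * gaussianRate v * mu) (gaussianRate v)
    (gaussianRate v * mu ^ 2 + (lam + v ^ 2 / 8)) (c * T - 1 - 1 / 2)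

section Model

variable {c lam mu T v : ℝ}

lemma mixA_pos (hlam : 0 < lam) (hmu : 0 < mu) : 0 < mixA c lam mu T := by
  unfold mixA
  positivity

lemma one_sub_div_pos (hlam : 0 < lam) (hmul : mu < 2 * lam) : 0 < 1 - mu / (2 * lam) := by
  rwa [sub_pos, div_lt_one (by positivity)]

lemma mixB_pos (hlam : 0 < lam) (hmul : mu < 2 * lam) : 0 < mixB c lam mu T :=
  Real.rpow_pos_of_pos (one_sub_div_pos hlam hmul) _

lemma mixA_mul_mixB_lt_one (hlam : 0 < lam) (hmu : 0 < mu) (hmul : mu < 2 * lam)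
    (hcT : 0 < c * T) : mixA c lam mu T * mixB c lam mu T < 1 := by
  have hsub := one_sub_div_pos hlam hmul
  have hquot : 0 < mu / (2 * lam) := by positivity
  rw [mixA, mixB, ← Real.mul_rpow (by positivity) hsub.le]
  exact Real.rpow_lt_one (by positivity) (by nlinarith) hcT

lemma two_mul_mixA_mul_mixB_div_lt_one (hlam : 0 < lam) (hmu : 0 < mu) (hmul : mu < 2 * lam)
    (hcT : 0 < c * T) :
    2 * (mixA c lam mu T * mixB c lam mu T) / (mixA c lam mu T + mixB c lam mu T) < 1 := by
  have ha := mixA_pos (c := c) (T := T) hlam hmu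
  have hb := mixB_pos (c := c) (T := T) hlam hmul
  have hab := mixA_mul_mixB_lt_one hlam hmu hmul hcT
  rw [div_lt_one (by positivity)]
  nlinarith [sq_nonneg (mixA c lam mu T - mixB c lam mu T), mul_pos ha hb]

lemma commonWeight_pos (hlam : 0 < lam) (hmu : 0 < mu) (hmul : mu < 2 * lam) (hcT : 0 < c * T) :
    0 < commonWeight c lam mu T := by
  have ha := mixA_pos (c := c) (T := T) hlam hmu
  have hb := mixB_pos (c := c) (T := T) hlam hmul
  have := Real.Gamma_pos_of_pos hcT
  unfold commonWeight
  positivity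

lemma add_half_rpow (hlam : 0 < lam) (hmu : 0 < mu) :
    (lam + mu / 2) ^ (c * T) = lam ^ (c * T) * mixA c lam mu T := by
  rw [mixA, ← Real.mul_rpow hlam.le (by positivity)]
  congr 1
  field_simp

lemma sub_half_rpow (hlam : 0 < lam) (hmul : mu < 2 * lam) :
    (lam - mu / 2) ^ (c * T) = lam ^ (c * T) * mixB c lam mu T := by
  rw [mixB, ← Real.mul_rpow hlam.le (one_sub_div_pos hlam hmul).le]
  congr 1
  field_simp

lemma mixA_div_mul_eq_commonWeight (hlam : 0 < lam) (hmul : mu < 2 * lam) :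
    mixA c lam mu T / (mixA c lam mu T + mixB c lam mu T) *
      ((lam - mu / 2) ^ (c * T) / Real.Gamma (c * T)) = commonWeight c lam mu T := by
  rw [sub_half_rpow hlam hmul, commonWeight, div_mul_div_comm]
  congr 1
  ring

lemma mixB_div_mul_eq_commonWeight (hlam : 0 < lam) (hmu : 0 < mu) :
    mixB c lam mu T / (mixA c lam mu T + mixB c lam mu T) *
      ((lam + mu / 2) ^ (c * T) / Real.Gamma (c * T)) = commonWeight c lam mu T := by
  rw [add_half_rpow hlam hmu, commonWeight, div_mul_div_comm]
  congr 1
  ring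

lemma commonWeight_mul_Gamma_mul_add (hlam : 0 < lam) (hmu : 0 < mu) (hmul : mu < 2 * lam)
    (hcT : 0 < c * T) : commonWeight c lam mu T * Real.Gamma (c * T) *
      ((1 / (lam - mu / 2)) ^ (c * T) + (1 / (lam + mu / 2)) ^ (c * T)) = 1 := by
  have ha := mixA_pos (c := c) (T := T) hlam hmu
  have hb := mixB_pos (c := c) (T := T) hlam hmul
  have := Real.Gamma_pos_of_pos hcT
  have := Real.rpow_pos_of_pos hlam (c * T)
  rw [Real.div_rpow one_pos.le (by linarith), Real.div_rpow one_pos.le (by linarith),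
    Real.one_rpow, add_half_rpow hlam hmu, sub_half_rpow hlam hmul, commonWeight]
  field_simp

lemma two_mul_commonWeight_mul_Gamma_div (hlam : 0 < lam) (hcT : 0 < c * T) :
    2 * commonWeight c lam mu T * Real.Gamma (c * T) / lam ^ (c * T) =
      2 * (mixA c lam mu T * mixB c lam mu T) / (mixA c lam mu T + mixB c lam mu T) := by
  have hΓ := (Real.Gamma_pos_of_pos hcT).ne'
  have hlamT := (Real.rpow_pos_of_pos hlam (c * T)).ne'
  rw [commonWeight, div_eq_iff hlamT, mul_div_assoc', div_mul_eq_mul_div, mul_div_mul_right _ _ hΓ,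
    div_mul_eq_mul_div]
  congr 1
  ring

lemma modelDensity_zero (hlam : 0 < lam) (hmu : 0 < mu) (hmul : mu < 2 * lam) (hcT : 1 < c * T) :
    modelDensity c lam mu T 0 = tilt (commonWeight c lam mu T / mu ^ (c * T))
      (doubleGammaProfile (c * T) (lam / mu)) := by
  have hminus : lamMinus lam mu ^ (c * T) = (lam - mu / 2) ^ (c * T) / mu ^ (c * T) := by
    rw [← Real.div_rpow (by linarith) hmu.le, lamMinus]
    congr 1
    field_simp
  have hplus : lamPlus lam mu ^ (c * T) = (lam + mu / 2) ^ (c * T) / mu ^ (c * T) := by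
    rw [← Real.div_rpow (by linarith) hmu.le, lamPlus]
    congr 1
    field_simp
  ext x
  rw [modelDensity, if_pos rfl, doubleGamma, tilt, doubleGammaProfile]
  split_ifs with hx hx'
  · rw [abs_of_neg hx, hminus, ← mixA_div_mul_eq_commonWeight hlam hmul,
      show lamMinus lam mu * x = -x / 2 + -(lam / mu * -x) by rw [lamMinus]; ring, Real.exp_add]
    ring
  · rw [abs_of_pos hx', hplus, ← mixB_div_mul_eq_commonWeight hlam hmu,
      show -lamPlus lam mu * x = -x / 2 + -(lam / mu * x) by rw [lamPlus]; ring, Real.exp_add]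
    ring
  · obtain rfl : x = 0 := by linarith
    rw [abs_zero, Real.zero_rpow (by linarith), zero_mul, mul_zero, mul_zero]

lemma gaussianRate_pos (hv : 0 < v) : 0 < gaussianRate v := by
  unfold gaussianRate
  positivity

lemma vgIntegrand_eq (lam s α C x : ℝ) (hv : 0 < v) {l : ℝ} (hl : 0 < l) :
    (√(2 * Real.pi * v ^ 2 * l))⁻¹ *
        Real.exp (-(x - (s - v ^ 2 / 2) * l) ^ 2 / (2 * v ^ 2 * l)) * C * l ^ (α - 1) *
        Real.exp (-(lam + s / 2) * l) =
      C * √(gaussianRate v / Real.pi) *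
        (Real.exp (-x / 2) * Real.exp (2 * gaussianRate v * s * x)) *
        besselKernel (gaussianRate v * s ^ 2 + (lam + v ^ 2 / 8)) (α - 1 - 1 / 2)
          (gaussianRate v * x ^ 2) l := by
  have hsqrt : (√(2 * Real.pi * v ^ 2 * l))⁻¹ = √(gaussianRate v / Real.pi) * (√l)⁻¹ := by
    rw [Real.sqrt_mul (by positivity), mul_inv, ← Real.sqrt_inv (2 * Real.pi * v ^ 2),
      gaussianRate]
    congr 3
    field_simp
  have hexp : Real.exp (-(x - (s - v ^ 2 / 2) * l) ^ 2 / (2 * v ^ 2 * l)) *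
      Real.exp (-(lam + s / 2) * l) =
      Real.exp (-x / 2) * Real.exp (2 * gaussianRate v * s * x) *
        Real.exp (-(gaussianRate v * x ^ 2 / l) -
          (gaussianRate v * s ^ 2 + (lam + v ^ 2 / 8)) * l) := by
    rw [← Real.exp_add, ← Real.exp_add, ← Real.exp_add, gaussianRate]
    congr 1
    field_simp
    ring
  rw [hsqrt, besselKernel, Real.rpow_sub hl (α - 1), ← Real.sqrt_eq_rpow]
  linear_combination (√(gaussianRate v / Real.pi) * (√l)⁻¹ * C * l ^ (α - 1)) * hexp

lemma vgPlus_eq (c lam mu T x : ℝ) (hv : 0 < v) : vgPlus c lam mu T v x =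
    (lam + mu / 2) ^ (c * T) / Real.Gamma (c * T) * √(gaussianRate v / Real.pi) *
      (Real.exp (-x / 2) * Real.exp (2 * gaussianRate v * mu * x)) *
      besselIntegral (gaussianRate v * mu ^ 2 + (lam + v ^ 2 / 8)) (c * T - 1 - 1 / 2)
        (gaussianRate v * x ^ 2) := by
  rw [vgPlus, besselIntegral, ← integral_const_mul]
  exact setIntegral_congr_fun measurableSet_Ioi fun l hl => vgIntegrand_eq lam mu _ _ x hv hl

lemma vgMinus_eq (c lam mu T x : ℝ) (hv : 0 < v) : vgMinus c lam mu T v x =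
    (lam - mu / 2) ^ (c * T) / Real.Gamma (c * T) * √(gaussianRate v / Real.pi) *
      (Real.exp (-x / 2) * Real.exp (-(2 * gaussianRate v * mu * x))) *
      besselIntegral (gaussianRate v * mu ^ 2 + (lam + v ^ 2 / 8)) (c * T - 1 - 1 / 2)
        (gaussianRate v * x ^ 2) := by
  rw [vgMinus, besselIntegral, ← integral_const_mul]
  refine setIntegral_congr_fun measurableSet_Ioi fun l hl => ?_
  simpa only [neg_div, ← sub_eq_add_neg, mul_neg, neg_mul, neg_sq] using
    vgIntegrand_eq lam (-mu) (c * T) ((lam - mu / 2) ^ (c * T) / Real.Gamma (c * T)) x hv hl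

lemma modelDensity_of_pos (T : ℝ) (hlam : 0 < lam) (hmu : 0 < mu) (hmul : mu < 2 * lam)
    (hv : 0 < v) : modelDensity c lam mu T v =
      tilt (2 * commonWeight c lam mu T * √(gaussianRate v / Real.pi))
        (mixProfile c lam mu T v) := by
  ext x
  have hminus := mixA_div_mul_eq_commonWeight (c := c) (T := T) hlam hmul
  have hplus := mixB_div_mul_eq_commonWeight (c := c) (T := T) hlam hmu
  rw [modelDensity, if_neg hv.ne', vgMix, vgPlus_eq _ _ _ _ x hv, vgMinus_eq _ _ _ _ x hv, tilt,
    mixProfile, vgProfile, Real.cosh_eq]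
  set J := besselIntegral _ _ _
  set S := √(gaussianRate v / Real.pi)
  set y := 2 * gaussianRate v * mu * x
  linear_combination (S * Real.exp (-x / 2) * Real.exp (-y) * J) * hminus +
    (S * Real.exp (-x / 2) * Real.exp y * J) * hplus

lemma mixProfile_exponent_add (lam mu θ : ℝ) (hv : 0 < v) :
    gaussianRate v * mu ^ 2 + (lam + v ^ 2 / 8) -
        (θ + 2 * gaussianRate v * mu) ^ 2 / (4 * gaussianRate v) =
      lam + v ^ 2 / 8 - v ^ 2 * θ ^ 2 / 2 - θ * mu := by
  rw [gaussianRate]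
  field_simp
  ring

lemma mixProfile_exponent_sub (lam mu θ : ℝ) (hv : 0 < v) :
    gaussianRate v * mu ^ 2 + (lam + v ^ 2 / 8) -
        (θ - 2 * gaussianRate v * mu) ^ 2 / (4 * gaussianRate v) =
      lam + v ^ 2 / 8 - v ^ 2 * θ ^ 2 / 2 + θ * mu := by
  rw [gaussianRate]
  field_simp
  ring

lemma integrable_exp_mul_mixProfile {θ : ℝ} (hcT : 0 < c * T) (hv : 0 < v)
    (hθ : |θ * mu| < lam + v ^ 2 / 8 - v ^ 2 * θ ^ 2 / 2) :
    Integrable fun x => Real.exp (θ * x) * mixProfile c lam mu T v x := by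
  obtain ⟨hneg, hpos⟩ := abs_lt.1 hθ
  refine integrable_exp_mul_vgProfile (gaussianRate_pos hv) (by linarith) ?_ ?_
  · rw [mixProfile_exponent_add lam mu θ hv]
    linarith
  · rw [mixProfile_exponent_sub lam mu θ hv]
    linarith

lemma integral_exp_mul_mixProfile {θ : ℝ} (hcT : 0 < c * T) (hv : 0 < v)
    (hθ : |θ * mu| < lam + v ^ 2 / 8 - v ^ 2 * θ ^ 2 / 2) :
    2 * √(gaussianRate v / Real.pi) * ∫ x, Real.exp (θ * x) * mixProfile c lam mu T v x =
      Real.Gamma (c * T) * ((1 / (lam + v ^ 2 / 8 - v ^ 2 * θ ^ 2 / 2 - θ * mu)) ^ (c * T) +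
        (1 / (lam + v ^ 2 / 8 - v ^ 2 * θ ^ 2 / 2 + θ * mu)) ^ (c * T)) := by
  obtain ⟨hneg, hpos⟩ := abs_lt.1 hθ
  have hrate := gaussianRate_pos hv
  have hsqrt : √(gaussianRate v / Real.pi) * √(Real.pi / gaussianRate v) = 1 := by
    rw [← inv_div Real.pi, Real.sqrt_inv, inv_mul_cancel₀ (by positivity)]
  rw [mixProfile, integral_exp_mul_vgProfile hrate (by linarith)
    (by rw [mixProfile_exponent_add lam mu θ hv]; linarith)
    (by rw [mixProfile_exponent_sub lam mu θ hv]; linarith),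
    mixProfile_exponent_add lam mu θ hv, mixProfile_exponent_sub lam mu θ hv,
    show c * T - 1 - 1 / 2 + 3 / 2 = c * T by ring]
  linear_combination (Real.Gamma (c * T) *
    ((1 / (lam + v ^ 2 / 8 - v ^ 2 * θ ^ 2 / 2 - θ * mu)) ^ (c * T) +
      (1 / (lam + v ^ 2 / 8 - v ^ 2 * θ ^ 2 / 2 + θ * mu)) ^ (c * T))) * hsqrt

theorem isSymmetricDensity_modelDensity_zero (hlam : 0 < lam) (hmu : 0 < mu)
    (hmul : mu < 2 * lam) (hcT : 1 < c * T) : IsSymmetricDensity (modelDensity c lam mu T 0) := by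
  have hcT₀ := one_pos.trans hcT
  have hhalf : |(-1 / 2 : ℝ)| < lam / mu := by
    rw [lt_div_iff₀ hmu]
    norm_num
    linarith
  have hexp : (fun x => Real.exp (-x / 2) * doubleGammaProfile (c * T) (lam / mu) x) =
      fun x => Real.exp (-1 / 2 * x) * doubleGammaProfile (c * T) (lam / mu) x := by
    ext x
    ring_nf
  rw [modelDensity_zero hlam hmu hmul hcT]
  refine isSymmetricDensity_tilt (div_pos (commonWeight_pos hlam hmu hmul hcT₀)
    (Real.rpow_pos_of_pos hmu _)).le (continuous_doubleGammaProfile hcT.le _)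
    (doubleGammaProfile_nonneg _ _) (doubleGammaProfile_neg _ _) ?_ ?_
  · rw [hexp]
    exact integrable_exp_mul_doubleGammaProfile hcT₀ hhalf
  · have hsub : 1 / (lam / mu - -1 / 2) = 1 / (lam + mu / 2) * mu := by
      rw [one_div_mul_eq_div, show lam / mu - -1 / 2 = (lam + mu / 2) / mu by field_simp; ring,
        one_div_div]
    have hadd : 1 / (lam / mu + -1 / 2) = 1 / (lam - mu / 2) * mu := by
      rw [one_div_mul_eq_div, show lam / mu + -1 / 2 = (lam - mu / 2) / mu by field_simp; ring,
        one_div_div]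
    rw [hexp, integral_exp_mul_doubleGammaProfile hcT₀ hhalf, hsub, hadd,
      Real.mul_rpow (by positivity) hmu.le,
      Real.mul_rpow (one_div_nonneg.2 (by linarith)) hmu.le]
    refine Eq.trans ?_ (commonWeight_mul_Gamma_mul_add hlam hmu hmul hcT₀)
    have := Real.rpow_pos_of_pos hmu (c * T)
    field_simp
    ring

theorem isSymmetricDensity_modelDensity_of_pos (hlam : 0 < lam) (hmu : 0 < mu)
    (hmul : mu < 2 * lam) (hcT : 1 / 2 < c * T) (hv : 0 < v) :
    IsSymmetricDensity (modelDensity c lam mu T v) := by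
  have hcT₀ : 0 < c * T := by linarith
  have hrate := gaussianRate_pos hv
  have hhalf : |-1 / 2 * mu| < lam + v ^ 2 / 8 - v ^ 2 * (-1 / 2) ^ 2 / 2 := by
    rw [abs_lt]
    constructor <;> linarith
  have hexp : (fun x => Real.exp (-x / 2) * mixProfile c lam mu T v x) =
      fun x => Real.exp (-1 / 2 * x) * mixProfile c lam mu T v x := by
    ext x
    ring_nf
  have hW := commonWeight_pos hlam hmu hmul hcT₀
  rw [modelDensity_of_pos T hlam hmu hmul hv]
  refine isSymmetricDensity_tilt (by positivity)
    (continuous_vgProfile _ hrate (by positivity) (by linarith)) (vgProfile_nonneg _ _ _ _)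
    (vgProfile_neg _ _ _ _) ?_ ?_
  · rw [hexp]
    exact integrable_exp_mul_mixProfile hcT₀ hv hhalf
  · rw [hexp, mul_right_comm 2, mul_right_comm, integral_exp_mul_mixProfile hcT₀ hv hhalf,
      show lam + v ^ 2 / 8 - v ^ 2 * (-1 / 2) ^ 2 / 2 - -1 / 2 * mu = lam + mu / 2 by ring,
      show lam + v ^ 2 / 8 - v ^ 2 * (-1 / 2) ^ 2 / 2 + -1 / 2 * mu = lam - mu / 2 by ring]
    refine Eq.trans ?_ (commonWeight_mul_Gamma_mul_add hlam hmu hmul hcT₀)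
    ring

theorem halfMoment_modelDensity (hlam : 0 < lam) (hmu : 0 < mu) (hmul : mu < 2 * lam)
    (hcT : 1 < c * T) (hv : 0 ≤ v) : halfMoment (modelDensity c lam mu T v) =
      2 * commonWeight c lam mu T * Real.Gamma (c * T) / (lam + v ^ 2 / 8) ^ (c * T) := by
  have hcT₀ := one_pos.trans hcT
  rcases hv.eq_or_lt with rfl | hv
  · have hκ : |(0 : ℝ)| < lam / mu := by
      rw [abs_zero]
      positivity
    have hint := integral_exp_mul_doubleGammaProfile hcT₀ hκ
    simp only [zero_mul, Real.exp_zero, one_mul, sub_zero, add_zero, one_div_div] at hint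
    have := Real.rpow_pos_of_pos hmu (c * T)
    rw [modelDensity_zero hlam hmu hmul hcT, halfMoment_tilt, hint,
      Real.div_rpow hmu.le hlam.le]
    norm_num
    field_simp
    ring
  · have hint := integral_exp_mul_mixProfile (θ := 0) (lam := lam) (mu := mu) hcT₀ hv (by
      rw [zero_mul, abs_zero]
      ring_nf
      positivity)
    simp only [zero_mul, Real.exp_zero, one_mul, sub_zero, add_zero, ne_eq, OfNat.ofNat_ne_zero,
      not_false_eq_true, zero_pow, mul_zero, zero_div] at hint
    rw [modelDensity_of_pos T hlam hmu hmul hv, halfMoment_tilt, mul_right_comm 2, mul_right_comm,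
      hint, Real.div_rpow one_pos.le (by positivity), Real.one_rpow]
    ring

lemma antitoneOn_halfMoment_modelDensity (hlam : 0 < lam) (hmu : 0 < mu) (hmul : mu < 2 * lam)
    (hcT : 1 < c * T) : AntitoneOn (fun v => halfMoment (modelDensity c lam mu T v)) (Ici 0) := by
  intro v hv w hw hvw
  rw [mem_Ici] at hv hw
  have hW := commonWeight_pos hlam hmu hmul (one_pos.trans hcT)
  have := Real.Gamma_pos_of_pos (one_pos.trans hcT)
  simp only [halfMoment_modelDensity hlam hmu hmul hcT hv,
    halfMoment_modelDensity hlam hmu hmul hcT hw]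
  gcongr

lemma halfMoment_modelDensity_pos (hlam : 0 < lam) (hmu : 0 < mu) (hmul : mu < 2 * lam)
    (hcT : 1 < c * T) (hv : 0 ≤ v) : 0 < halfMoment (modelDensity c lam mu T v) := by
  have hW := commonWeight_pos hlam hmu hmul (one_pos.trans hcT)
  have := Real.Gamma_pos_of_pos (one_pos.trans hcT)
  rw [halfMoment_modelDensity hlam hmu hmul hcT hv]
  positivity

lemma halfMoment_modelDensity_zero_lt_one (hlam : 0 < lam) (hmu : 0 < mu) (hmul : mu < 2 * lam)
    (hcT : 1 < c * T) : halfMoment (modelDensity c lam mu T 0) < 1 := by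
  have hcT₀ := one_pos.trans hcT
  rw [halfMoment_modelDensity hlam hmu hmul hcT le_rfl, zero_pow two_ne_zero, zero_div, add_zero,
    two_mul_commonWeight_mul_Gamma_div hlam hcT₀]
  exact two_mul_mixA_mul_mixB_div_lt_one hlam hmu hmul hcT₀

theorem isSymmetricDensity_modelDensity (hlam : 0 < lam) (hmu : 0 < mu) (hmul : mu < 2 * lam)
    (hcT : 1 < c * T) (hv : 0 ≤ v) : IsSymmetricDensity (modelDensity c lam mu T v) := by
  rcases hv.eq_or_lt with rfl | hv
  · exact isSymmetricDensity_modelDensity_zero hlam hmu hmul hcT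
  · exact isSymmetricDensity_modelDensity_of_pos hlam hmu hmul (by linarith) hv

theorem eventually_bsDensity_lt_modelDensity {σ : ℝ} (hlam : 0 < lam) (hmu : 0 < mu)
    (hmul : mu < 2 * lam) (hcT : 1 < c * T) (hv : 0 ≤ v) (hσ : 0 < σ) :
    ∀ᶠ x in atTop, bsDensity σ x < modelDensity c lam mu T v x := by
  have hW := commonWeight_pos hlam hmu hmul (one_pos.trans hcT)
  rcases hv.eq_or_lt with rfl | hv
  · rw [modelDensity_zero hlam hmu hmul hcT]
    refine eventually_bsDensity_lt_tilt (C := lam / mu) (by positivity) one_pos (fun x hx => ?_) hσ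
    rw [one_mul]
    exact exp_neg_le_doubleGammaProfile hcT.le _ hx
  · have hrate := gaussianRate_pos hv
    rw [modelDensity_of_pos T hlam hmu hmul hv]
    exact eventually_bsDensity_lt_tilt (by positivity) one_half_pos
      (fun x hx => exp_neg_le_vgProfile _ hrate (by positivity) (by linarith) hx) hσ

theorem exists_modelDensity_zero_lt_and_not_alternatesOn {m : ℝ} (hlam : 0 < lam) (hmu : 0 < mu)
    (hmul : mu < 2 * lam) (hcT : 1 < c * T) (hm : 0 < m) (M : ℝ) :
    ∃ δ > 0, ∀ σ ∈ Icc (m / 2) M,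
      (∀ x, |x| ≤ δ → modelDensity c lam mu T 0 x < bsDensity σ x) ∧
        ¬AlternatesOn (modelDensity c lam mu T 0 - bsDensity σ) (Ioi 0) 4 := by
  obtain ⟨ε, hε, hlt⟩ := exists_pos_forall_tilt_lt_bsDensity hm M
  have hW := commonWeight_pos hlam hmu hmul (one_pos.trans hcT)
  rw [modelDensity_zero hlam hmu hmul hcT]
  set N := commonWeight c lam mu T / mu ^ (c * T)
  have hN : 0 < N := by positivity
  have hzero := (tendsto_doubleGammaProfile_zero hcT (lam / mu)).const_mul N
  rw [mul_zero] at hzero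
  have hsmall := hzero.eventually_lt_const hε
  obtain ⟨δ, hδ, hball⟩ := Metric.nhds_basis_closedBall.mem_iff.1 hsmall
  refine ⟨min δ m, lt_min hδ hm, fun σ hσ => ⟨fun x hx => ?_,
    not_alternatesOn_tilt_doubleGammaProfile_sub_bsDensity hN ((half_pos hm).trans_le hσ.1)⟩⟩
  refine hlt _ _ σ hσ x (hx.trans (min_le_right _ _)) (hball ?_)
  rw [mem_closedBall_zero_iff, Real.norm_eq_abs]
  exact hx.trans (min_le_left _ _)

lemma tendsto_gaussianRate : Tendsto gaussianRate (𝓝[>] 0) atTop := by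
  have hsq : Tendsto (fun v : ℝ => 2 * v ^ 2) (𝓝[>] 0) (𝓝[>] 0) := by
    refine tendsto_nhdsWithin_iff.2 ⟨(Continuous.tendsto' (by fun_prop) 0 0 (by norm_num)).mono_left
      nhdsWithin_le_nhds, ?_⟩
    filter_upwards [self_mem_nhdsWithin] with v (hv : 0 < v)
    exact mem_Ioi.2 (by positivity)
  exact hsq.inv_tendsto_nhdsGT_zero.congr fun v => (one_div _).symm

theorem exists_eventually_modelDensity_lt_bsDensity {m : ℝ} (hlam : 0 < lam) (hmu : 0 < mu)
    (hmul : mu < 2 * lam) (hcT : 1 < c * T) (hm : 0 < m) (M : ℝ) :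
    ∃ δ > 0, ∀ᶠ v in 𝓝[>] 0, ∀ σ ∈ Icc (m / 2) M, ∀ x, |x| ≤ δ →
      modelDensity c lam mu T v x < bsDensity σ x := by
  obtain ⟨ε, hε, hlt⟩ := exists_pos_forall_tilt_lt_bsDensity hm M
  have hW := commonWeight_pos hlam hmu hmul (one_pos.trans hcT)
  obtain ⟨δ, hδ, hsmall⟩ := exists_eventually_forall_sqrt_mul_vgProfile_lt
    (β := c * T - 1) (ε := ε * √Real.pi / (2 * commonWeight c lam mu T)) hmu hlam (by linarith)
    (by positivity)
  refine ⟨min δ m, lt_min hδ hm, ?_⟩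
  filter_upwards [tendsto_gaussianRate.eventually hsmall, self_mem_nhdsWithin]
    with v hv (hv₀ : 0 < v) σ hσ x hx
  rw [modelDensity_of_pos T hlam hmu hmul hv₀]
  refine hlt _ _ σ hσ x (hx.trans (min_le_right _ _)) ?_
  have hprofile := hv (lam + v ^ 2 / 8) (le_add_of_nonneg_right (by positivity)) x
    (hx.trans (min_le_left _ _))
  have hπ : 0 < √Real.pi := Real.sqrt_pos.2 Real.pi_pos
  rw [← mixProfile, lt_div_iff₀ (by positivity)] at hprofile
  rw [Real.sqrt_div (gaussianRate_pos hv₀).le, mul_div_assoc', div_mul_eq_mul_div,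
    div_lt_iff₀ hπ]
  linarith

theorem exists_forall_modelDensity_lt_and_not_alternatesOn {m : ℝ} (hlam : 0 < lam)
    (hmu : 0 < mu) (hmul : mu < 2 * lam) (hcT : 1 < c * T) (hm : 0 < m) (M : ℝ) :
    ∃ v₀ > 0, ∀ v ∈ Ico 0 v₀, ∃ δ > 0, ∀ σ ∈ Icc (m / 2) M,
      (∀ x, |x| ≤ δ → modelDensity c lam mu T v x < bsDensity σ x) ∧
        ¬AlternatesOn (modelDensity c lam mu T v - bsDensity σ) (Ioi 0) 4 := by
  obtain ⟨δ, hδ, hlt⟩ := exists_eventually_modelDensity_lt_bsDensity hlam hmu hmul hcT hm M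
  obtain ⟨z₀, hnot⟩ := exists_not_alternatesOn_tilt_vgProfile
    (γ := c * T - 1 - 1 / 2) (by linarith) hδ (one_pos.trans_le (le_max_right M 1))
  have hdrift : Tendsto (fun v => 2 * gaussianRate v * mu * δ) (𝓝[>] 0) atTop :=
    ((tendsto_gaussianRate.const_mul_atTop two_pos).atTop_mul_const hmu).atTop_mul_const hδ
  obtain ⟨v₀, hv₀, hv⟩ := mem_nhdsGT_iff_exists_Ioo_subset.1
    (hlt.and (hdrift.eventually_ge_atTop z₀))
  refine ⟨v₀, hv₀, fun v hvv₀ => ?_⟩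
  rcases hvv₀.1.eq_or_lt with rfl | hvpos
  · exact exists_modelDensity_zero_lt_and_not_alternatesOn hlam hmu hmul hcT hm M
  obtain ⟨hnear, hz⟩ := hv ⟨hvpos, hvv₀.2⟩
  refine ⟨δ, hδ, fun σ hσ => ⟨hnear σ hσ, fun halt => ?_⟩⟩
  have hrate := gaussianRate_pos hvpos
  have hW := commonWeight_pos hlam hmu hmul (one_pos.trans hcT)
  have haway : AlternatesOn (modelDensity c lam mu T v - bsDensity σ) (Ioi δ) 4 :=
    halt.Ioi_of_nonpos fun x hx =>
      (sub_neg.2 (hnear σ hσ x (by rw [abs_of_pos hx.1]; exact hx.2))).le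
  rw [modelDensity_of_pos T hlam hmu hmul hvpos] at haway
  exact hnot _ _ _ _ σ hrate (by positivity) (by positivity) (by positivity) hz
    ⟨(half_pos hm).trans_le hσ.1, hσ.2.trans (le_max_left _ _)⟩ haway

end Model

/-- **Main theorem: W-shaped implied volatility in the variance-gamma mixture model.**
For `cT > 1` there is `v_◦ > 0` such that for all `v ∈ [0, v_◦)` any implied volatility
function of the model is W-shaped: for some `σ_* > 0` the function `K ↦ σ_v(K) − σ_*`
exhibits the sign pattern `+,−,+,−,+` and has no more than four sign changes. -/
theorem vg_mixture_W_shaped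
    (c lam mu T : ℝ)
    (hc : 0 < c) (hlam : 0 < lam) (hmu : 0 < mu) (hT : 0 < T)
    (hmu2lam : mu < 2 * lam) (hcT : 1 < c * T) :
    ∃ vcirc > (0 : ℝ), ∀ v : ℝ, 0 ≤ v → v < vcirc →
      ∀ σv : ℝ → ℝ, ContinuousOn σv (Set.Ioi 0) → (∀ K, 0 < K → 0 < σv K) →
        (∀ K, 0 < K → callPrice (modelDensity c lam mu T v) K = callBS K (σv K)) →
        ∃ σstar > (0 : ℝ),
          (∃ K0 K1 K2 K3 K4 : ℝ, 0 < K0 ∧ K0 < K1 ∧ K1 < K2 ∧ K2 < K3 ∧ K3 < K4 ∧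
            σstar < σv K0 ∧ σv K1 < σstar ∧ σstar < σv K2 ∧ σv K3 < σstar ∧
            σstar < σv K4) ∧
          ¬∃ x : Fin 6 → ℝ, StrictMono x ∧ 0 < x 0 ∧
            ∀ i : Fin 5, (σv (x i.castSucc) - σstar) * (σv (x i.succ) - σstar) < 0 := by
  obtain ⟨m, hm, M, hbounds⟩ := exists_bounds_of_callBS_one_eq
    (halfMoment_modelDensity_pos hlam hmu hmu2lam hcT zero_le_one)
    (halfMoment_modelDensity_zero_lt_one hlam hmu hmu2lam hcT)
  obtain ⟨v₀, hv₀, hnear⟩ :=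
    exists_forall_modelDensity_lt_and_not_alternatesOn hlam hmu hmu2lam hcT hm M
  refine ⟨min v₀ 1, lt_min hv₀ one_pos, fun v hv hvlt σv _ hpos hcall => ?_⟩
  obtain ⟨hvv₀, hv₁⟩ := lt_min_iff.1 hvlt
  have hf := isSymmetricDensity_modelDensity hlam hmu hmu2lam hcT hv
  have hanti := antitoneOn_halfMoment_modelDensity hlam hmu hmu2lam hcT
  have hatm : σv 1 ∈ Icc m M := hbounds _ hf
    ⟨hanti hv (mem_Ici.2 zero_le_one) hv₁.le, hanti self_mem_Ici hv hv⟩ _ (hpos 1 one_pos)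
    (hcall 1 one_pos).symm
  obtain ⟨δ, hδ, hδσ⟩ := hnear v ⟨hv, hvv₀⟩
  refine IsImpliedVol.isWShaped ⟨hpos, hcall⟩ hf hδ ?_ fun σ hσ =>
    eventually_bsDensity_lt_modelDensity hlam hmu hmu2lam hcT hv hσ
  filter_upwards [Icc_mem_nhdsLE ((half_lt_self hm).trans_le hatm.1)] with σ hσ
  exact hδσ σ ⟨hσ.1, hσ.2.trans hatm.2⟩
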